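/- arXiv:1903.06826 — 7 statements merged into one kernel-verified Lean document; each statement's English description precedes it below -/
import Mathlib

section
/- Let D ⊆ ℝ, let w_n : D → ℝ (n ∈ ℕ) be a sequence of functions, let φ : D × ℕ → ℝ, ϕ : D → ℝ, θ ∈ ℝ, and let (μ_n) be a sequence of reals. Suppose that for every z ∈ D there is a sequence ε_n(z) → 0 such that w_n(z) = (1 + ε_n(z)) · φ(z,n) · cos(2π(μ_n · ϕ(z) − θ)) for all n. Let x, y ∈ D be distinct points with ϕ(x) ≠ ϕ(y), ϕ(x) ≠ −ϕ(y), and φ(x,n) · φ(y,n) > 0 for all n, and suppose q · ϕ(x) = p · ϕ(y) for some nonzero coprime integers p, q. Assume that for every nonzero integer r, both sequences (μ_n ϕ(x)/r)_{n} and (μ_n ϕ(y)/r)_{n} are equidistributed modulo 1. Then there exists a real number L with 1/3 ≤ L ≤ 2/3 such that (1/N) · #{0 ≤ n < N : sgn(w_n(x)) = sgn(w_n(y))} → L as N → ∞. -/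
open Filter Real MeasureTheory
open scoped Classical

noncomputable def sgn (t : ℝ) : ℝ := if 0 < t then 1 else if t < 0 then -1 else 0

def EquidistributedMod1 (a : ℕ → ℝ) : Prop :=
  ∀ c d : ℝ, 0 ≤ c → c ≤ d → d ≤ 1 →
    Tendsto (fun N : ℕ =>
      (((Finset.range N).filter (fun n => Int.fract (a n) ∈ Set.Icc c d)).card : ℝ) / N)
      atTop (nhds (d - c))

/-- The empirical probability measure of the first `N + 1` terms of a real sequence. -/
noncomputable def empiricalMeasure (f : ℕ → ℝ) (N : ℕ) : ProbabilityMeasure ℝ :=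
  ⟨(ProbabilityTheory.uniformOn (Finset.range (N + 1) : Set ℕ)).map f, by
    have : IsProbabilityMeasure
        (ProbabilityTheory.uniformOn (Finset.range (N + 1) : Set ℕ)) :=
      ProbabilityTheory.isProbabilityMeasure_uniformOn (Finset.finite_toSet _)
        ⟨0, by simp⟩
    exact Measure.isProbabilityMeasure_map (measurable_of_countable f).aemeasurable⟩

lemma empiricalMeasure_apply (f : ℕ → ℝ) (N : ℕ) {E : Set ℝ} (hE : MeasurableSet E) :
    (empiricalMeasure f N E : ℝ) =
      (((Finset.range (N + 1)).filter (fun n => f n ∈ E)).card : ℝ) / ((N + 1 : ℕ) : ℝ) := by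
  have h : (empiricalMeasure f N : Measure ℝ) E =
      ((((Finset.range (N + 1)).filter (fun n => f n ∈ E)).card : ENNReal)) /
        ((N + 1 : ℕ) : ENNReal) := by
    change ((ProbabilityTheory.uniformOn (Finset.range (N + 1) : Set ℕ)).map f) E = _
    rw [Measure.map_apply (measurable_of_countable f) hE,
      ← ProbabilityTheory.uniformOn_inter_self (Finset.finite_toSet _)]
    have : (Finset.range (N + 1) : Set ℕ) ∩ f ⁻¹' E =
        (((Finset.range (N + 1)).filter (fun n => f n ∈ E) : Finset ℕ) : Set ℕ) := by
      ext n; simp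
    rw [this, ProbabilityTheory.uniformOn_apply_finset,
      Finset.inter_eq_right.2 (Finset.filter_subset _ _), Finset.card_range]
  rw [ProbabilityMeasure.coeFn_def]
  change ((empiricalMeasure f N : Measure ℝ) E).toReal = _
  rw [h, ENNReal.toReal_div, ENNReal.toReal_natCast, ENNReal.toReal_natCast]

/-- Lebesgue measure on the unit interval. -/
noncomputable def unitIntervalMeasure : ProbabilityMeasure ℝ :=
  ⟨volume.restrict (Set.Icc 0 1), ⟨by simp⟩⟩

lemma EquidistributedMod1.tendsto_empiricalMeasure {a : ℕ → ℝ} (ha : EquidistributedMod1 a) :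
    Tendsto (empiricalMeasure (fun n => Int.fract (a n))) atTop (nhds unitIntervalMeasure) := by
  refine IsPiSystem.tendsto_probabilityMeasure_of_tendsto_of_mem
    (S := {s | ∃ c d : ℝ, s = Set.Icc c d}) ?_ ?_ ?_ ?_
  · rintro _ ⟨c, d, rfl⟩ _ ⟨c', d', rfl⟩ -
    exact ⟨_, _, Set.Icc_inter_Icc⟩
  · rintro _ ⟨c, d, rfl⟩
    exact measurableSet_Icc
  · intro u hu x hx
    obtain ⟨ε, hε, h⟩ := Metric.nhds_basis_closedBall.mem_iff.1 (hu.mem_nhds hx)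
    rw [Real.closedBall_eq_Icc] at h
    exact ⟨_, ⟨_, _, rfl⟩, Icc_mem_nhds (by linarith) (by linarith), h⟩
  · rintro _ ⟨c, d, rfl⟩
    rw [← NNReal.tendsto_coe]
    simp_rw [empiricalMeasure_apply _ _ measurableSet_Icc]
    have hvol : (unitIntervalMeasure (Set.Icc c d) : ℝ) = max (min d 1 - max c 0) 0 := by
      change ((volume.restrict (Set.Icc (0 : ℝ) 1)) (Set.Icc c d)).toReal = _
      rw [Measure.restrict_apply measurableSet_Icc, Set.Icc_inter_Icc, Real.volume_Icc,
        ENNReal.toReal_ofReal']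
    have hiff : ∀ n, Int.fract (a n) ∈ Set.Icc c d ↔
        Int.fract (a n) ∈ Set.Icc (max c 0) (min d 1) := fun n => by
      simp [Int.fract_nonneg, (Int.fract_lt_one _).le]
    rw [hvol]
    simp_rw [hiff]
    rcases le_or_gt (max c 0) (min d 1) with h | h
    · rw [max_eq_left (sub_nonneg.2 h)]
      exact (tendsto_add_atTop_iff_nat 1).2
        (ha (max c 0) (min d 1) (le_max_right _ _) h (min_le_right _ _))
    · rw [max_eq_right (sub_nonpos.2 h.le)]
      have hempty : ∀ n, ¬ Int.fract (a n) ∈ Set.Icc (max c 0) (min d 1) := fun n hn =>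
        h.not_ge (hn.1.trans hn.2)
      simp_rw [hempty]
      simp

/-- Equidistributed sequences visit a Jordan measurable set with frequency its measure. -/
lemma EquidistributedMod1.tendsto_card_filter_div {a : ℕ → ℝ} (ha : EquidistributedMod1 a)
    {E : Set ℝ} (hE : MeasurableSet E) (hE0 : volume (frontier E) = 0) :
    Tendsto (fun N : ℕ =>
      (((Finset.range N).filter (fun n => Int.fract (a n) ∈ E)).card : ℝ) / N)
      atTop (nhds (volume.real (E ∩ Set.Icc 0 1))) := by
  have h0 : unitIntervalMeasure (frontier E) = 0 := by
    rw [ProbabilityMeasure.null_iff_toMeasure_null]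
    exact Measure.restrict_le_self.absolutelyContinuous hE0
  have h := ProbabilityMeasure.tendsto_measure_of_null_frontier_of_tendsto
    ha.tendsto_empiricalMeasure h0
  rw [← NNReal.tendsto_coe] at h
  simp_rw [empiricalMeasure_apply _ _ hE] at h
  have hvol : (unitIntervalMeasure E : ℝ) = volume.real (E ∩ Set.Icc 0 1) := by
    change ((volume.restrict (Set.Icc (0 : ℝ) 1)) E).toReal = _
    rw [Measure.restrict_apply hE]
    rfl
  rw [hvol] at h
  exact (tendsto_add_atTop_iff_nat 1).1 h

/-- Changing a predicate at finitely many indices does not change its asymptotic density. -/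
lemma tendsto_card_filter_div_congr {P Q : ℕ → Prop} {L : ℝ} (h : ∀ᶠ n in atTop, P n ↔ Q n)
    (hP : Tendsto (fun N : ℕ => (((Finset.range N).filter P).card : ℝ) / N) atTop (nhds L)) :
    Tendsto (fun N : ℕ => (((Finset.range N).filter Q).card : ℝ) / N) atTop (nhds L) := by
  obtain ⟨M, hM⟩ := eventually_atTop.1 h
  have hsum : ∀ R : ℕ → Prop, ∀ N ≥ M, (((Finset.range N).filter R).card : ℝ) =
      ∑ n ∈ Finset.range M, (if R n then 1 else 0) +
        ∑ n ∈ Finset.Ico M N, (if R n then (1 : ℝ) else 0) := fun R N hN => by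
    rw [Finset.sum_range_add_sum_Ico _ hN]; simp
  have hdiff : Tendsto (fun N : ℕ => ((∑ n ∈ Finset.range M, (if Q n then (1 : ℝ) else 0)) -
      ∑ n ∈ Finset.range M, (if P n then (1 : ℝ) else 0)) / (N : ℝ)) atTop (nhds 0) :=
    tendsto_const_div_atTop_nhds_zero_nat _
  have := hP.add hdiff
  rw [add_zero] at this
  refine this.congr' ?_
  filter_upwards [eventually_ge_atTop M] with N hN
  rw [hsum P N hN, hsum Q N hN, ← add_div]
  have : ∑ n ∈ Finset.Ico M N, (if P n then (1 : ℝ) else 0) =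
      ∑ n ∈ Finset.Ico M N, (if Q n then (1 : ℝ) else 0) :=
    Finset.sum_congr rfl fun n hn => by simp [hM n (Finset.mem_Ico.1 hn).1]
  rw [this]
  congr 1
  ring

/-- Of `m ≥ 2` equally spaced points on the circle, between a third and two thirds lie in any
half-open half circle. -/
lemma card_filter_fract_add_lt_half {m : ℕ} (hm : 2 ≤ m) {q : ℤ} (hq : IsCoprime q (m : ℤ))
    (v : ℝ) :
    m ≤ 3 * ((Finset.range m).filter
        (fun j : ℕ => Int.fract (v + q * (j / m : ℝ)) < 1 / 2)).card ∧
      3 * ((Finset.range m).filter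
        (fun j : ℕ => Int.fract (v + q * (j / m : ℝ)) < 1 / 2)).card ≤ 2 * m := by
  have hm0 : (0 : ℝ) < m := by positivity
  have hmz : (0 : ℤ) < m := by positivity
  set k : ℤ := ⌊m * v⌋ with hk
  set δ : ℝ := Int.fract (m * v) with hδ
  have hδ0 : 0 ≤ δ := Int.fract_nonneg _
  have hδ1 : δ < 1 := Int.fract_lt_one _
  set g : ℕ → ℕ := fun j => ((k + q * j) % m).toNat with hg
  have hgcast : ∀ j, ((g j : ℕ) : ℤ) = (k + q * j) % m := fun j =>
    Int.toNat_of_nonneg (Int.emod_nonneg _ hmz.ne')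
  have hglt : ∀ j, g j < m := fun j => by
    have := Int.emod_lt_of_pos (k + q * j) hmz
    have := hgcast j
    omega
  have hginj : Set.InjOn g (Finset.range m) := by
    intro i hi j hj hij
    simp only [Finset.coe_range, Set.mem_Iio] at hi hj
    have h : (k + q * i) ≡ (k + q * j) [ZMOD m] := by
      change (k + q * i) % (m : ℤ) = (k + q * j) % m
      rw [← hgcast, ← hgcast, hij]
    have h2 : (m : ℤ) ∣ q * ((j : ℤ) - i) := by
      have := h.dvd
      rwa [show k + q * (j : ℤ) - (k + q * i) = q * (j - i) by ring] at this
    have h3 := (hq.symm).dvd_of_dvd_mul_left h2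
    have h4 : ((j : ℤ) - i) = 0 := Int.eq_zero_of_abs_lt_dvd h3 (by rw [abs_lt]; omega)
    omega
  have hgimg : (Finset.range m).image g = Finset.range m := by
    refine Finset.eq_of_subset_of_card_le ?_ ?_
    · intro i hi
      obtain ⟨j, -, rfl⟩ := Finset.mem_image.1 hi
      exact Finset.mem_range.2 (hglt j)
    · rw [Finset.card_image_of_injOn hginj]
  have hfract : ∀ j : ℕ, Int.fract (v + q * (j / m : ℝ)) = ((g j : ℝ) + δ) / m := by
    intro j
    rw [Int.fract_eq_iff]
    refine ⟨by positivity, ?_, (k + q * j) / m, ?_⟩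
    · rw [div_lt_one hm0]
      have : ((g j + 1 : ℕ) : ℝ) ≤ m := by exact_mod_cast hglt j
      push_cast at this
      linarith
    · have h1 : ((g j : ℕ) : ℝ) = (((k + q * j) % m : ℤ) : ℝ) := by
        rw [← hgcast]; simp
      have h2 : (((k + q * j) % m : ℤ) : ℝ) + m * (((k + q * j) / m : ℤ) : ℝ) = k + q * j := by
        exact_mod_cast Int.emod_add_mul_ediv (k + q * j) m
      have h3 : (m : ℝ) * v = k + δ := (Int.floor_add_fract _).symm
      rw [h1]
      field_simp
      linarith
  have hcard : ((Finset.range m).filter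
        (fun j : ℕ => Int.fract (v + q * (j / m : ℝ)) < 1 / 2)).card =
      ((Finset.range m).filter (fun i : ℕ => ((i : ℝ) + δ) / m < 1 / 2)).card := by
    conv_rhs => rw [← hgimg, Finset.filter_image]
    rw [Finset.card_image_of_injOn
      (hginj.mono (by intro i hi; exact (Finset.mem_filter.1 hi).1))]
    simp_rw [hfract]
  rw [hcard]
  have hlow : Finset.range (m / 2) ⊆
      (Finset.range m).filter (fun i : ℕ => ((i : ℝ) + δ) / m < 1 / 2) := by
    intro i hi
    rw [Finset.mem_range] at hi
    rw [Finset.mem_filter, Finset.mem_range, div_lt_iff₀ hm0]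
    refine ⟨by omega, ?_⟩
    have : ((2 * (i + 1) : ℕ) : ℝ) ≤ m := by exact_mod_cast (by omega : 2 * (i + 1) ≤ m)
    push_cast at this
    linarith
  have hup : (Finset.range m).filter (fun i : ℕ => ((i : ℝ) + δ) / m < 1 / 2) ⊆
      Finset.range ((m + 1) / 2) := by
    intro i hi
    rw [Finset.mem_filter, Finset.mem_range, div_lt_iff₀ hm0] at hi
    have : ((2 * i : ℕ) : ℝ) < m := by push_cast; linarith [hi.2]
    have : 2 * i < m := by exact_mod_cast this
    rw [Finset.mem_range]
    omega
  have h1 := Finset.card_le_card hlow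
  have h2 := Finset.card_le_card hup
  rw [Finset.card_range] at h1 h2
  omega

lemma cos_pos_iff_fract_lt_half {u : ℝ} (h : Real.cos (2 * π * u) ≠ 0) :
    0 < Real.cos (2 * π * u) ↔ Int.fract (u + 1 / 4) < 1 / 2 := by
  have hcos : Real.cos (2 * π * u) = Real.sin (2 * π * Int.fract (u + 1 / 4)) := by
    rw [Int.fract, show 2 * π * (u + 1 / 4 - (⌊u + 1 / 4⌋ : ℝ)) =
      2 * π * u + π / 2 - (⌊u + 1 / 4⌋ : ℝ) * (2 * π) by ring, Real.sin_sub_int_mul_two_pi,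
      Real.sin_add_pi_div_two]
  have h0 := Int.fract_nonneg (u + 1 / 4)
  have h1 := Int.fract_lt_one (u + 1 / 4)
  rw [hcos] at h ⊢
  generalize Int.fract (u + 1 / 4) = f at *
  have hpi := Real.pi_pos
  constructor
  · intro hpos
    by_contra! hf
    have := Real.sin_nonpos_of_nonpos_of_neg_pi_le (x := 2 * π * f - 2 * π)
      (by nlinarith) (by nlinarith)
    rw [Real.sin_sub_two_pi] at this
    linarith
  · intro hf
    exact lt_of_le_of_ne (Real.sin_nonneg_of_nonneg_of_le_pi (by positivity) (by nlinarith)) h.symm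

lemma countable_cos_eq_zero {p : ℤ} (hp : p ≠ 0) (θ : ℝ) :
    {t : ℝ | Real.cos (2 * π * (p * t - θ)) = 0}.Countable := by
  refine (Set.countable_range
    (fun k : ℤ => ((2 * (k : ℝ) + 1) / 4 + θ) / p)).mono ?_
  intro t ht
  obtain ⟨k, hk⟩ := Real.cos_eq_zero_iff.1 ht
  refine ⟨k, ?_⟩
  have hp' : (p : ℝ) ≠ 0 := by exact_mod_cast hp
  have hk' : p * t - θ = (2 * (k : ℝ) + 1) / 4 := by
    have := Real.pi_pos.ne'
    field_simp
    field_simp at hk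
    linarith
  simp only
  rw [← hk']
  field_simp
  ring

lemma sgn_eq_sgn_iff {a b : ℝ} (ha : a ≠ 0) (hb : b ≠ 0) : sgn a = sgn b ↔ (0 < a ↔ 0 < b) := by
  unfold sgn
  rcases ha.lt_or_gt with ha | ha <;> rcases hb.lt_or_gt with hb | hb <;>
    simp [ha, hb, ha.le.not_gt, hb.le.not_gt] <;> norm_num

lemma sgn_mul (a b : ℝ) : sgn (a * b) = sgn a * sgn b := by
  unfold sgn
  rcases lt_trichotomy a 0 with ha | rfl | ha <;> rcases lt_trichotomy b 0 with hb | rfl | hb <;>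
    simp [*, mul_pos_of_neg_of_neg, mul_neg_of_pos_of_neg, mul_neg_of_neg_of_pos,
      le_of_lt, not_lt_of_ge]

lemma sgn_of_pos {a : ℝ} (ha : 0 < a) : sgn a = 1 := if_pos ha

lemma measurable_sgn : Measurable sgn :=
  Measurable.ite measurableSet_Ioi measurable_const
    (Measurable.ite measurableSet_Iio measurable_const measurable_const)

lemma sgn_eventuallyEq {a : ℝ} (ha : a ≠ 0) : ∀ᶠ b in nhds a, sgn b = sgn a := by
  rcases ha.lt_or_gt with h | h
  · filter_upwards [Iio_mem_nhds h] with b hb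
    simp [sgn, h, Set.mem_Iio.1 hb, h.le.not_gt, (Set.mem_Iio.1 hb).le.not_gt]
  · filter_upwards [Ioi_mem_nhds h] with b hb
    rw [sgn_of_pos h, sgn_of_pos hb]

/-- The phases at which the cosine waves of frequencies `p` and `q` have the same sign. -/
def sameSignSet (p q : ℤ) (θ : ℝ) : Set ℝ :=
  {t | sgn (Real.cos (2 * π * (p * t - θ))) = sgn (Real.cos (2 * π * (q * t - θ)))}

lemma sameSignSet_comm (p q : ℤ) (θ : ℝ) : sameSignSet p q θ = sameSignSet q p θ :=
  Set.ext fun _ => eq_comm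

lemma measurableSet_sameSignSet (p q : ℤ) (θ : ℝ) : MeasurableSet (sameSignSet p q θ) :=
  measurableSet_eq_fun (measurable_sgn.comp (by fun_prop)) (measurable_sgn.comp (by fun_prop))

lemma frontier_sameSignSet_subset (p q : ℤ) (θ : ℝ) :
    frontier (sameSignSet p q θ) ⊆ {t : ℝ | Real.cos (2 * π * (p * t - θ)) = 0} ∪
      {t : ℝ | Real.cos (2 * π * (q * t - θ)) = 0} := by
  intro t ht
  by_contra hcon
  simp only [Set.mem_union, Set.mem_ofPred_eq, not_or] at hcon
  have hloc : ∀ r : ℤ, Real.cos (2 * π * (r * t - θ)) ≠ 0 → ∀ᶠ s in nhds t,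
      sgn (Real.cos (2 * π * (r * s - θ))) = sgn (Real.cos (2 * π * (r * t - θ))) := fun r hr =>
    (show Continuous fun s : ℝ => Real.cos (2 * π * (r * s - θ)) by fun_prop).continuousAt.eventually
      (sgn_eventuallyEq hr)
  have hev := (hloc p hcon.1).and (hloc q hcon.2)
  by_cases hmem : t ∈ sameSignSet p q θ
  · refine ht.2 (mem_interior_iff_mem_nhds.2 ?_)
    filter_upwards [hev] with s hs
    change sgn _ = sgn _
    rw [hs.1, hs.2]
    exact hmem
  · refine mem_closure_iff_frequently.1 ht.1 ?_
    filter_upwards [hev] with s hs hs'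
    refine hmem ?_
    change sgn _ = sgn _
    rw [← hs.1, ← hs.2]
    exact hs'

lemma volume_frontier_sameSignSet {p q : ℤ} (hp : p ≠ 0) (hq : q ≠ 0) (θ : ℝ) :
    volume (frontier (sameSignSet p q θ)) = 0 :=
  (((countable_cos_eq_zero hp θ).union (countable_cos_eq_zero hq θ)).mono
    (frontier_sameSignSet_subset p q θ)).measure_zero _

lemma fract_mul_add_nat_div_natAbs {p : ℤ} (hp : p ≠ 0) (t α : ℝ) (j : ℕ) :
    Int.fract (p * (t + j / (p.natAbs : ℝ)) + α) = Int.fract (p * t + α) := by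
  have hsign : (p : ℝ) / (p.natAbs : ℝ) = (p.sign : ℝ) := by
    rw [div_eq_iff (by simpa using hp)]
    rw [← Int.cast_natCast, ← Int.cast_mul, Int.sign_mul_natAbs]
  rw [show (p : ℝ) * (t + j / (p.natAbs : ℝ)) + α =
      p * t + α + ((p.sign * (j : ℤ) : ℤ) : ℝ) by
    push_cast
    rw [← hsign]
    ring, Int.fract_add_intCast]

/-- If one of two coprime frequencies is at least `2` in absolute value, the corresponding square
waves agree on at least a third and at most two thirds of a period. -/
lemma volume_fract_agree_bounds {p q : ℤ} (hp : 2 ≤ p.natAbs) (hpq : IsCoprime p q) (α β : ℝ) :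
    volume.real ({t : ℝ | Int.fract (p * t + α) < 1 / 2 ↔ Int.fract (q * t + β) < 1 / 2} ∩
      Set.Icc 0 1) ∈ Set.Icc (1 / 3 : ℝ) (2 / 3) := by
  set E := {t : ℝ | Int.fract (p * t + α) < 1 / 2 ↔ Int.fract (q * t + β) < 1 / 2} with hEdef
  set m := p.natAbs with hm
  have hp0 : p ≠ 0 := by rintro rfl; simp at hm; omega
  have hm0 : (0 : ℝ) < m := by positivity
  have hcop : IsCoprime q (m : ℤ) := by
    rw [Int.isCoprime_iff_gcd_eq_one] at hpq ⊢
    rw [Int.gcd_comm] at hpq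
    exact hpq
  have hEm : MeasurableSet E := by
    have h : ∀ (r : ℤ) (γ : ℝ), MeasurableSet {t : ℝ | Int.fract (r * t + γ) < 1 / 2} :=
      fun r γ => measurableSet_lt (measurable_fract.comp (by fun_prop)) measurable_const
    exact (h p α).iff (h q β)
  set g : ℝ → ℝ := E.indicator 1 with hg
  have hgint : ∀ a b : ℝ, IntervalIntegrable g volume a b := fun a b =>
    intervalIntegrable_iff.2 (Integrable.indicator (f := fun _ => (1 : ℝ))
      (integrableOn_const (by simp)) hEm)
  have hint : volume.real (E ∩ Set.Icc 0 1) = ∫ t in (0 : ℝ)..1, g t := by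
    rw [intervalIntegral.integral_of_le zero_le_one, ← integral_Icc_eq_integral_Ioc, hg,
      integral_indicator_one hEm, measureReal_restrict_apply hEm]
  have hper : Function.Periodic g 1 := fun t => by
    have : t + 1 ∈ E ↔ t ∈ E := by
      have h : ∀ (r : ℤ) (γ : ℝ), Int.fract (r * (t + 1) + γ) = Int.fract (r * t + γ) :=
        fun r γ => by
          rw [show (r : ℝ) * (t + 1) + γ = r * t + γ + r by ring, Int.fract_add_intCast]
      simp only [hEdef, Set.mem_ofPred_eq, h]
    simp [hg, Set.indicator, this]
  have hshift : ∀ j : ℕ, ∫ t in (0 : ℝ)..1, g (t + j / m) = ∫ t in (0 : ℝ)..1, g t := fun j => by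
    rw [intervalIntegral.integral_comp_add_right, zero_add, add_comm,
      hper.intervalIntegral_add_eq (j / m : ℝ) 0, zero_add]
  have hshiftint : ∀ j ∈ Finset.range m,
      IntervalIntegrable (fun t => g (t + j / m)) volume 0 1 := fun j _ => by
    simpa using (hgint (0 + j / m) (1 + j / m)).comp_add_right (j / m : ℝ)
  have hsum : (m : ℝ) * ∫ t in (0 : ℝ)..1, g t =
      ∫ t in (0 : ℝ)..1, ∑ j ∈ Finset.range m, g (t + j / m) := by
    rw [intervalIntegral.integral_finsetSum hshiftint]
    simp [hshift]
  have hcount : ∀ t : ℝ, (m : ℝ) / 3 ≤ ∑ j ∈ Finset.range m, g (t + j / m) ∧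
      ∑ j ∈ Finset.range m, g (t + j / m) ≤ 2 * m / 3 := by
    intro t
    obtain ⟨h1, h2⟩ := card_filter_fract_add_lt_half hp hcop (q * t + β)
    have hsumcard : ∑ j ∈ Finset.range m, g (t + j / m) =
        (((Finset.range m).filter (fun j : ℕ => t + j / m ∈ E)).card : ℝ) := by
      rw [Finset.card_filter]
      push_cast
      exact Finset.sum_congr rfl fun j _ => by simp [hg, Set.indicator]
    have hmem : ∀ j : ℕ, t + j / m ∈ E ↔ (Int.fract (p * t + α) < 1 / 2 ↔
        Int.fract (q * t + β + q * (j / m : ℝ)) < 1 / 2) := fun j => by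
      rw [hEdef, Set.mem_ofPred_eq, fract_mul_add_nat_div_natAbs hp0,
        show (q : ℝ) * (t + j / m) + β = q * t + β + q * (j / m : ℝ) by ring]
    rw [hsumcard]
    simp_rw [hmem]
    have hcompl := Finset.card_filter_add_card_filter_not (s := Finset.range m)
      (fun j : ℕ => Int.fract (q * t + β + q * (j / m : ℝ)) < 1 / 2)
    rw [Finset.card_range] at hcompl
    have key : ∀ c : ℕ, m ≤ 3 * c → 3 * c ≤ 2 * m → (m : ℝ) / 3 ≤ c ∧ (c : ℝ) ≤ 2 * m / 3 := by
      intro c hc1 hc2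
      have hc1' : (m : ℝ) ≤ 3 * c := by exact_mod_cast hc1
      have hc2' : 3 * (c : ℝ) ≤ 2 * m := by exact_mod_cast hc2
      constructor <;> linarith
    by_cases hpt : Int.fract (p * t + α) < 1 / 2
    · simp only [hpt, true_iff]
      exact key _ h1 h2
    · simp only [hpt, false_iff]
      exact key _ (by omega) (by omega)
  have hsumint : IntervalIntegrable (fun t => ∑ j ∈ Finset.range m, g (t + j / m)) volume 0 1 := by
    simpa only [Finset.sum_fn] using IntervalIntegrable.sum _ hshiftint
  have hlow := intervalIntegral.integral_mono_on zero_le_one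
    (intervalIntegrable_const (c := (m : ℝ) / 3)) hsumint fun t _ => (hcount t).1
  have hup := intervalIntegral.integral_mono_on zero_le_one hsumint
    (intervalIntegrable_const (c := 2 * (m : ℝ) / 3)) fun t _ => (hcount t).2
  rw [← hsum] at hlow hup
  simp only [intervalIntegral.integral_const, sub_zero, one_smul] at hlow hup
  rw [hint]
  constructor
  · by_contra! h
    nlinarith
  · by_contra! h
    nlinarith

lemma volume_sameSignSet_bounds {p q : ℤ} (hp : 2 ≤ p.natAbs) (hq : q ≠ 0) (hpq : IsCoprime p q)
    (θ : ℝ) : volume.real (sameSignSet p q θ ∩ Set.Icc 0 1) ∈ Set.Icc (1 / 3 : ℝ) (2 / 3) := by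
  have hp0 : p ≠ 0 := by rintro rfl; simp at hp
  have hae : sameSignSet p q θ =ᵐ[volume] {t : ℝ | Int.fract (p * t + (1 / 4 - θ)) < 1 / 2 ↔
      Int.fract (q * t + (1 / 4 - θ)) < 1 / 2} := by
    have hnull : ∀ r : ℤ, r ≠ 0 → ∀ᵐ t : ℝ, Real.cos (2 * π * (r * t - θ)) ≠ 0 := fun r hr => by
      rw [ae_iff]
      simpa using (countable_cos_eq_zero hr θ).measure_zero volume
    filter_upwards [hnull p hp0, hnull q hq] with t htp htq
    refine propext ?_
    change sgn _ = sgn _ ↔ (_ ↔ _)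
    rw [sgn_eq_sgn_iff htp htq, cos_pos_iff_fract_lt_half htp, cos_pos_iff_fract_lt_half htq,
      sub_add_eq_add_sub, sub_add_eq_add_sub, add_sub_assoc, add_sub_assoc]
  rw [measureReal_congr (ae_eq_set_inter hae (ae_eq_refl (Set.Icc 0 1)))]
  exact volume_fract_agree_bounds hp hpq _ _

lemma fract_mem_sameSignSet_iff (p q : ℤ) (θ t : ℝ) :
    Int.fract t ∈ sameSignSet p q θ ↔ t ∈ sameSignSet p q θ := by
  have h : ∀ r : ℤ, Real.cos (2 * π * (r * Int.fract t - θ)) = Real.cos (2 * π * (r * t - θ)) :=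
    fun r => by
      rw [← Real.cos_sub_int_mul_two_pi (2 * π * (r * t - θ)) (r * ⌊t⌋), Int.fract]
      push_cast
      congr 1
      ring
  simp only [sameSignSet, Set.mem_ofPred_eq, h]

theorem sign_correlation_universality
    (D : Set ℝ) (w : ℕ → ℝ → ℝ) (φ : ℝ → ℕ → ℝ) (ϕ : ℝ → ℝ) (θ : ℝ) (μ : ℕ → ℝ)
    (hasympt : ∀ z ∈ D, ∃ ε : ℕ → ℝ, Tendsto ε atTop (nhds 0) ∧
      ∀ n, w n z = (1 + ε n) * φ z n * Real.cos (2 * π * (μ n * ϕ z - θ)))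
    (x y : ℝ) (hx : x ∈ D) (hy : y ∈ D) (hxy : x ≠ y)
    (h1 : ϕ x ≠ ϕ y) (h2 : ϕ x ≠ -ϕ y)
    (hφ : ∀ n, φ x n * φ y n > 0)
    (p q : ℤ) (hp : p ≠ 0) (hq : q ≠ 0) (hcop : IsCoprime p q)
    (hpq : (q : ℝ) * ϕ x = (p : ℝ) * ϕ y)
    (hequi : ∀ r : ℤ, r ≠ 0 →
      EquidistributedMod1 (fun n => μ n * ϕ x / (r : ℝ)) ∧
      EquidistributedMod1 (fun n => μ n * ϕ y / (r : ℝ))) :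
    ∃ L : ℝ, 1/3 ≤ L ∧ L ≤ 2/3 ∧
      Tendsto (fun N : ℕ =>
        (((Finset.range N).filter (fun n => sgn (w n x) = sgn (w n y))).card : ℝ) / N)
        atTop (nhds L) := by
  have hp' : (p : ℝ) ≠ 0 := by exact_mod_cast hp
  have hL : volume.real (sameSignSet p q θ ∩ Set.Icc 0 1) ∈ Set.Icc (1 / 3 : ℝ) (2 / 3) := by
    by_cases hp2 : 2 ≤ p.natAbs
    · exact volume_sameSignSet_bounds hp2 hq hcop θ
    by_cases hq2 : 2 ≤ q.natAbs
    · rw [sameSignSet_comm]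
      exact volume_sameSignSet_bounds hq2 hp hcop.symm θ
    exfalso
    have hp1 : p = 1 ∨ p = -1 := by omega
    have hq1 : q = 1 ∨ q = -1 := by omega
    rcases hp1 with rfl | rfl <;> rcases hq1 with rfl | rfl <;> norm_num at hpq
    · exact h1 hpq
    · exact h2 (by linarith)
    · exact h2 hpq
    · exact h1 hpq
  refine ⟨_, hL.1, hL.2, ?_⟩
  have htend := (hequi p hp).1.tendsto_card_filter_div (measurableSet_sameSignSet p q θ)
    (volume_frontier_sameSignSet hp hq θ)
  simp_rw [fract_mem_sameSignSet_iff] at htend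
  refine tendsto_card_filter_div_congr ?_ htend
  obtain ⟨εx, hεx, hwx⟩ := hasympt x hx
  obtain ⟨εy, hεy, hwy⟩ := hasympt y hy
  filter_upwards [hεx.eventually_const_lt neg_one_lt_zero,
      hεy.eventually_const_lt neg_one_lt_zero] with n hnx hny
  have hphase_x : (p : ℝ) * (μ n * ϕ x / p) = μ n * ϕ x := by field_simp
  have hphase_y : (q : ℝ) * (μ n * ϕ x / p) = μ n * ϕ y := by
    field_simp
    linear_combination μ n * hpq
  have hsgn : sgn (φ x n) = sgn (φ y n) ∧ sgn (φ x n) ≠ 0 := by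
    rcases pos_and_pos_or_neg_and_neg_of_mul_pos (hφ n) with ⟨ha, hb⟩ | ⟨ha, hb⟩ <;>
      simp [sgn, ha, hb, ha.le.not_gt, hb.le.not_gt]
  rw [hwx, hwy]
  simp only [sgn_mul]
  rw [sgn_of_pos (by linarith : 0 < 1 + εx n), sgn_of_pos (by linarith : 0 < 1 + εy n),
    one_mul, one_mul, ← hsgn.1, mul_right_inj' hsgn.2, sameSignSet, Set.mem_ofPred_eq, hphase_x,
    hphase_y]
end

section
/- Let D ⊆ ℝ, let w_n : D → ℝ (n ∈ ℕ), φ : D × ℕ → ℝ, ϕ : D → ℝ, θ ∈ ℝ, and let (μ_n) be a sequence of reals. Suppose x, y ∈ D are such that there are sequences ε_n(x) → 0 and ε_n(y) → 0 with w_n(x) = (1 + ε_n(x)) · φ(x,n) · cos(2π(μ_n ϕ(x) − θ)) and w_n(y) = (1 + ε_n(y)) · φ(y,n) · cos(2π(μ_n ϕ(y) − θ)) for all n, and that φ(x,n) · φ(y,n) > 0 for all n. If the sequence of pairs (μ_n ϕ(x), μ_n ϕ(y)) is equidistributed modulo 1 in ℝ², then (1/N) · #{0 ≤ n < N : sgn(w_n(x))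 = sgn(w_n(y))} → 1/2 as N → ∞. -/
open Filter Real MeasureTheory
open scoped Classical

def EquidistributedMod1Pair (a b : ℕ → ℝ) : Prop :=
  ∀ c₁ d₁ c₂ d₂ : ℝ, 0 ≤ c₁ → c₁ ≤ d₁ → d₁ ≤ 1 → 0 ≤ c₂ → c₂ ≤ d₂ → d₂ ≤ 1 →
    Tendsto (fun N : ℕ =>
      (((Finset.range N).filter (fun n =>
        Int.fract (a n) ∈ Set.Icc c₁ d₁ ∧ Int.fract (b n) ∈ Set.Icc c₂ d₂)).card : ℝ) / N)
      atTop (nhds ((d₁ - c₁) * (d₂ - c₂)))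

open Finset in
/-- If two real sequences eventually differ by at most a sequence whose averages tend to zero,
then the averages of one converge as soon as those of the other do. -/
theorem tendsto_average_of_eventually_abs_sub_le {f g e : ℕ → ℝ} {L : ℝ}
    (h : ∀ᶠ n in atTop, |f n - g n| ≤ e n)
    (he : Tendsto (fun N : ℕ => (∑ n ∈ range N, e n) / N) atTop (nhds 0))
    (hg : Tendsto (fun N : ℕ => (∑ n ∈ range N, g n) / N) atTop (nhds L)) :
    Tendsto (fun N : ℕ => (∑ n ∈ range N, f n) / N) atTop (nhds L) := by
  set r : ℕ → ℝ := fun n => max (|f n - g n| - e n) 0 with hr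
  have hr0 : Tendsto r atTop (nhds 0) := by
    refine tendsto_const_nhds.congr' ?_
    filter_upwards [h] with n hn
    simp [hr, hn]
  have hsum := he.add hr0.cesaro
  rw [add_zero] at hsum
  have hdiff : Tendsto (fun N : ℕ => (∑ n ∈ range N, (f n - g n)) / N) atTop (nhds 0) := by
    refine squeeze_zero_norm (fun N => ?_) hsum
    rw [norm_div, Real.norm_natCast, inv_mul_eq_div, ← add_div, ← sum_add_distrib]
    gcongr
    refine (norm_sum_le _ _).trans (sum_le_sum fun n _ => ?_)
    rw [Real.norm_eq_abs]
    linarith [le_max_left (|f n - g n| - e n) 0]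
  have hadd := hdiff.add hg
  rw [zero_add] at hadd
  refine hadd.congr fun N => ?_
  rw [← add_div, ← sum_add_distrib]
  simp

theorem sgn_eq_sgn_iff_mul_pos {a b : ℝ} (ha : a ≠ 0) (hb : b ≠ 0) :
    sgn a = sgn b ↔ 0 < a * b := by
  unfold sgn
  rcases ha.lt_or_gt with ha | ha <;> rcases hb.lt_or_gt with hb | hb
  · simp [ha, hb, ha.not_gt, hb.not_gt, mul_pos_of_neg_of_neg]
  · have := mul_neg_of_neg_of_pos ha hb
    simp only [ha, hb, ha.not_gt, this.not_gt]
    norm_num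
  · have := mul_neg_of_pos_of_neg ha hb
    simp only [ha, hb, hb.not_gt, this.not_gt]
    norm_num
  · simp [ha, hb]

/-- Up to a global sign, the shifted cosine of period `1` is a sine with shift in `[0, 1/2)`. -/
theorem exists_cos_eq_mul_sin_fract (θ : ℝ) :
    ∃ s c : ℝ, 0 ≤ s ∧ s < 1 / 2 ∧ c ≠ 0 ∧
      ∀ t : ℝ, Real.cos (2 * π * (t - θ)) = c * Real.sin (2 * π * (Int.fract t - s)) := by
  refine ⟨Int.fract (2 * θ - 1 / 2) / 2, (-1) ^ ⌊2 * θ - 1 / 2⌋, ?_, ?_, ?_, fun t => ?_⟩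
  · have := Int.fract_nonneg (2 * θ - 1 / 2)
    positivity
  · linarith [Int.fract_lt_one (2 * θ - 1 / 2)]
  · exact zpow_ne_zero _ (by norm_num)
  · have hθ := Int.floor_add_fract (2 * θ - 1 / 2)
    have ht := Int.floor_add_fract t
    have hangle : 2 * π * (t - θ) =
        2 * π * (Int.fract t - Int.fract (2 * θ - 1 / 2) / 2) - π / 2
          + ⌊t⌋ * (2 * π) - ⌊2 * θ - 1 / 2⌋ * π := by
      linear_combination (-2 * π) * ht + π * hθ
    rw [hangle, Real.cos_sub_int_mul_pi, Real.cos_add_int_mul_two_pi, Real.cos_sub_pi_div_two]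

theorem sin_shift_pos {s u : ℝ} (h₁ : s < u) (h₂ : u < s + 1 / 2) :
    0 < Real.sin (2 * π * (u - s)) :=
  Real.sin_pos_of_pos_of_lt_pi (by have := sub_pos.2 h₁; positivity) (by nlinarith [Real.pi_pos])

theorem sin_shift_neg {s u : ℝ} (hs₀ : 0 ≤ s) (hs : s < 1 / 2) (hu₀ : 0 ≤ u) (hu : u < 1)
    (h : u < s ∨ s + 1 / 2 < u) : Real.sin (2 * π * (u - s)) < 0 := by
  have hπ := Real.pi_pos
  rcases h with h | h
  · exact Real.sin_neg_of_neg_of_neg_pi_lt (by nlinarith) (by nlinarith)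
  · rw [← Real.sin_sub_two_pi]
    exact Real.sin_neg_of_neg_of_neg_pi_lt (by nlinarith) (by nlinarith)

theorem sin_shift_pos_or_neg {s u : ℝ} (hs₀ : 0 ≤ s) (hs : s < 1 / 2) (hu₀ : 0 ≤ u)
    (hu : u < 1) (h₁ : u ≠ s) (h₂ : u ≠ s + 1 / 2) :
    (u ∈ Set.Icc s (s + 1 / 2) ∧ 0 < Real.sin (2 * π * (u - s))) ∨
      (u ∉ Set.Icc s (s + 1 / 2) ∧ Real.sin (2 * π * (u - s)) < 0) := by
  by_cases h : u ∈ Set.Icc s (s + 1 / 2)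
  · exact .inl ⟨h, sin_shift_pos (h.1.lt_of_ne' h₁) (h.2.lt_of_ne h₂)⟩
  · refine .inr ⟨h, sin_shift_neg hs₀ hs hu₀ hu ?_⟩
    by_contra! hmem
    exact h hmem

theorem sign_correlation_generic_half
    (D : Set ℝ) (w : ℕ → ℝ → ℝ) (φ : ℝ → ℕ → ℝ) (ϕ : ℝ → ℝ) (θ : ℝ) (μ : ℕ → ℝ)
    (x y : ℝ) (hx : x ∈ D) (hy : y ∈ D)
    (hax : ∃ ε : ℕ → ℝ, Tendsto ε atTop (nhds 0) ∧
      ∀ n, w n x = (1 + ε n) * φ x n * Real.cos (2 * π * (μ n * ϕ x - θ)))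
    (hay : ∃ ε : ℕ → ℝ, Tendsto ε atTop (nhds 0) ∧
      ∀ n, w n y = (1 + ε n) * φ y n * Real.cos (2 * π * (μ n * ϕ y - θ)))
    (hφ : ∀ n, φ x n * φ y n > 0)
    (hequi : EquidistributedMod1Pair (fun n => μ n * ϕ x) (fun n => μ n * ϕ y)) :
    Tendsto (fun N : ℕ =>
      (((Finset.range N).filter (fun n => sgn (w n x) = sgn (w n y))).card : ℝ) / N)
      atTop (nhds (1/2)) := by
  obtain ⟨ε, hε, hwx⟩ := hax
  obtain ⟨δ, hδ, hwy⟩ := hay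
  obtain ⟨s, c, hs₀, hs, hc, hcos⟩ := exists_cos_eq_mul_sin_fract θ
  set u : ℕ → ℝ := fun n => Int.fract (μ n * ϕ x)
  set v : ℕ → ℝ := fun n => Int.fract (μ n * ϕ y)
  let I : ℝ → ℝ → ℝ → ℝ → ℕ → ℝ := fun c₁ d₁ c₂ d₂ n =>
    if u n ∈ Set.Icc c₁ d₁ ∧ v n ∈ Set.Icc c₂ d₂ then 1 else 0
  have hI : ∀ c₁ d₁ c₂ d₂ : ℝ, 0 ≤ c₁ → c₁ ≤ d₁ → d₁ ≤ 1 → 0 ≤ c₂ → c₂ ≤ d₂ → d₂ ≤ 1 →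
      Tendsto (fun N : ℕ => (∑ n ∈ Finset.range N, I c₁ d₁ c₂ d₂ n) / N) atTop
        (nhds ((d₁ - c₁) * (d₂ - c₂))) := by
    intro c₁ d₁ c₂ d₂ h₁ h₂ h₃ h₄ h₅ h₆
    refine (hequi c₁ d₁ c₂ d₂ h₁ h₂ h₃ h₄ h₅ h₆).congr fun N => ?_
    rw [Finset.sum_boole]
  have hboundary : Tendsto (fun N : ℕ => (∑ n ∈ Finset.range N,
      (I s s 0 1 n + I (s + 1 / 2) (s + 1 / 2) 0 1 n + I 0 1 s s n
        + I 0 1 (s + 1 / 2) (s + 1 / 2) n)) / N) atTop (nhds 0) := by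
    have h := (((hI s s 0 1 (by linarith) (by linarith) (by linarith) (by norm_num)
      (by norm_num) (by norm_num)).add
      (hI (s + 1 / 2) (s + 1 / 2) 0 1 (by linarith) (by linarith) (by linarith) (by norm_num)
        (by norm_num) (by norm_num))).add
      (hI 0 1 s s (by norm_num) (by norm_num) (by norm_num) (by linarith) (by linarith)
        (by linarith))).add
      (hI 0 1 (s + 1 / 2) (s + 1 / 2) (by norm_num) (by norm_num) (by norm_num) (by linarith)
        (by linarith) (by linarith))
    simp only [sub_self, zero_mul, mul_zero, add_zero] at h
    simpa only [Finset.sum_add_distrib, add_div] using h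
  have hmain : Tendsto (fun N : ℕ => (∑ n ∈ Finset.range N,
      (I 0 1 0 1 n - I s (s + 1 / 2) 0 1 n - I 0 1 s (s + 1 / 2) n
        + 2 * I s (s + 1 / 2) s (s + 1 / 2) n)) / N) atTop (nhds (1 / 2)) := by
    have h := (((hI 0 1 0 1 (by norm_num) (by norm_num) (by norm_num) (by norm_num)
      (by norm_num) (by norm_num)).sub
      (hI s (s + 1 / 2) 0 1 (by linarith) (by linarith) (by linarith) (by norm_num)
        (by norm_num) (by norm_num))).sub
      (hI 0 1 s (s + 1 / 2) (by norm_num) (by norm_num) (by norm_num) (by linarith)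
        (by linarith) (by linarith))).add
      ((hI s (s + 1 / 2) s (s + 1 / 2) (by linarith) (by linarith) (by linarith) (by linarith)
        (by linarith) (by linarith)).const_mul 2)
    convert h using 2 with N
    · simp only [Finset.sum_add_distrib, Finset.sum_sub_distrib, ← Finset.mul_sum]
      ring
    · ring
  refine (tendsto_average_of_eventually_abs_sub_le
    (f := fun n => if sgn (w n x) = sgn (w n y) then 1 else 0) ?_ hboundary hmain).congr
    fun N => by rw [Finset.sum_boole]
  filter_upwards [hε.eventually_const_lt (show (-1 : ℝ) < 0 by norm_num),
    hδ.eventually_const_lt (show (-1 : ℝ) < 0 by norm_num)] with n hεn hδn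
  have hu₀ : 0 ≤ u n := Int.fract_nonneg _
  have hu₁ : u n < 1 := Int.fract_lt_one _
  have hv₀ : 0 ≤ v n := Int.fract_nonneg _
  have hv₁ : v n < 1 := Int.fract_lt_one _
  have hmemu : u n ∈ Set.Icc (0 : ℝ) 1 := ⟨hu₀, hu₁.le⟩
  have hmemv : v n ∈ Set.Icc (0 : ℝ) 1 := ⟨hv₀, hv₁.le⟩
  have hprod : ∃ K : ℝ, 0 < K ∧ w n x * w n y =
      K * (Real.sin (2 * π * (u n - s)) * Real.sin (2 * π * (v n - s))) := by
    refine ⟨(1 + ε n) * (1 + δ n) * (φ x n * φ y n) * c ^ 2, ?_, ?_⟩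
    · have h₁ : 0 < 1 + ε n := by linarith
      have h₂ : 0 < 1 + δ n := by linarith
      have h₃ := hφ n
      positivity
    · rw [hwx, hwy, hcos, hcos]
      ring
  obtain ⟨K, hK, hprod⟩ := hprod
  simp only [I, hmemu, hmemv, true_and, and_true, Set.Icc_self, Set.mem_singleton_iff]
  by_cases hgen : u n = s ∨ u n = s + 1 / 2 ∨ v n = s ∨ v n = s + 1 / 2
  · have hle : (1 : ℝ) ≤ (if u n = s then 1 else 0) + (if u n = s + 1 / 2 then 1 else 0)
        + (if v n = s then 1 else 0) + (if v n = s + 1 / 2 then 1 else 0) := by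
      rcases hgen with h | h | h | h <;> rw [if_pos h] <;> split_ifs <;> norm_num
    refine le_trans ?_ hle
    by_cases hA : u n ∈ Set.Icc s (s + 1 / 2) <;> by_cases hB : v n ∈ Set.Icc s (s + 1 / 2) <;>
      simp only [hA, hB, and_self, and_true, and_false, if_true, if_false] <;>
      split_ifs <;> norm_num
  push Not at hgen
  obtain ⟨hg₁, hg₂, hg₃, hg₄⟩ := hgen
  have hsgn : Real.sin (2 * π * (u n - s)) * Real.sin (2 * π * (v n - s)) ≠ 0 →
      (sgn (w n x) = sgn (w n y) ↔
        0 < Real.sin (2 * π * (u n - s)) * Real.sin (2 * π * (v n - s))) := by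
    intro h
    have hne : w n x * w n y ≠ 0 := hprod ▸ mul_ne_zero hK.ne' h
    rw [sgn_eq_sgn_iff_mul_pos (left_ne_zero_of_mul hne) (right_ne_zero_of_mul hne), hprod,
      mul_pos_iff_of_pos_left hK]
  simp only [hg₁, hg₂, hg₃, hg₄, if_false, add_zero]
  rcases sin_shift_pos_or_neg hs₀ hs hu₀ hu₁ hg₁ hg₂ with ⟨hA, hSu⟩ | ⟨hA, hSu⟩ <;>
    rcases sin_shift_pos_or_neg hs₀ hs hv₀ hv₁ hg₃ hg₄ with ⟨hB, hSv⟩ | ⟨hB, hSv⟩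
  · have h := mul_pos hSu hSv
    simp only [hA, hB, (hsgn h.ne').2 h, and_self, if_true]
    norm_num
  · have h := mul_neg_of_pos_of_neg hSu hSv
    simp only [hA, hB, mt (hsgn h.ne).1 h.not_gt, and_false, if_true, if_false]
    norm_num
  · have h := mul_neg_of_neg_of_pos hSu hSv
    simp only [hA, hB, mt (hsgn h.ne).1 h.not_gt, false_and, if_true, if_false]
    norm_num
  · have h := mul_pos_of_neg_of_neg hSu hSv
    simp only [hA, hB, (hsgn h.ne').2 h, and_self, if_true, if_false]
    norm_num
end

section
/- Let y be a nonzero real number and let (μ_n) be a sequence of reals such that the sequence (μ_n · y) is equidistributed modulo 1. Then (1/N) · #{0 ≤ n < N : sgn(cos(2π · 3μ_n y)) = sgn(cos(2π · μ_n y))} → 1/3 as N → ∞. (This shows the lower bound 1/3 in the universality law for sign correlations is attained.) -/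
open Filter Real MeasureTheory
open scoped Classical

/-- The real numbers `c` and `c * k` have the same sign iff `c = 0` or `k > 0`. -/
theorem sgn_mul_eq_sgn_iff (c k : ℝ) : sgn (c * k) = sgn c ↔ c = 0 ∨ 0 < k := by
  rcases lt_trichotomy c 0 with hc | rfl | hc
  · rcases lt_trichotomy k 0 with hk | rfl | hk
    · have := mul_pos_of_neg_of_neg hc hk
      simp [sgn, this, hc, hc.not_gt, hc.ne, hk.not_gt]
      norm_num
    · simp [sgn, hc, hc.not_gt, hc.ne]
    · have := mul_neg_of_neg_of_pos hc hk
      simp [sgn, this, this.not_gt, hc, hc.not_gt, hk]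
  · simp
  · rcases lt_trichotomy k 0 with hk | rfl | hk
    · have := mul_neg_of_pos_of_neg hc hk
      simp [sgn, this, this.not_gt, hc, hc.ne', hk.not_gt]
      norm_num
    · simp [sgn, hc, hc.ne']
    · have := mul_pos hc hk
      simp [sgn, this, hc, hk]

theorem one_half_lt_cos_two_pi_mul_iff {u : ℝ} (hu : |u| ≤ 1 / 2) :
    1 / 2 < cos (2 * π * u) ↔ |u| < 1 / 6 := by
  have hpi := pi_pos
  have habs : cos (2 * π * u) = cos (2 * π * |u|) := by
    rw [← cos_abs, abs_mul, abs_of_pos (by positivity)]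
  have hmem : 2 * π * |u| ∈ Set.Icc 0 π := ⟨by positivity, by nlinarith⟩
  have hmem' : π / 3 ∈ Set.Icc 0 π := ⟨by positivity, by linarith⟩
  rw [habs, ← cos_pi_div_three, strictAntiOn_cos.lt_iff_gt hmem' hmem]
  constructor <;> intro h <;> nlinarith

theorem cos_two_pi_mul_eq_zero_iff {u : ℝ} (hu : |u| ≤ 1 / 2) :
    cos (2 * π * u) = 0 ↔ |u| = 1 / 4 := by
  have hpi := pi_pos
  have habs : cos (2 * π * u) = cos (2 * π * |u|) := by
    rw [← cos_abs, abs_mul, abs_of_pos (by positivity)]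
  have hmem : 2 * π * |u| ∈ Set.Icc 0 π := ⟨by positivity, by nlinarith⟩
  have hmem' : π / 2 ∈ Set.Icc 0 π := ⟨by positivity, by linarith⟩
  rw [habs, ← cos_pi_div_two, injOn_cos.eq_iff hmem hmem']
  constructor
  · intro h
    apply mul_left_cancel₀ (by positivity : 2 * π ≠ 0)
    linarith
  · intro h
    rw [h]
    ring

theorem cos_two_pi_mul_sub_intCast (x : ℝ) (m : ℤ) :
    cos (2 * π * (x - m)) = cos (2 * π * x) := by
  rw [← cos_sub_int_mul_two_pi (2 * π * x) m]
  ring_nf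

/-- `cos (2π · 3x)` and `cos (2πx)` have the same sign, for `x` in `[0, 1)`, exactly on a union of
three intervals and two points. -/
theorem sgn_cos_three_mul_eq_iff {x : ℝ} (h0 : 0 ≤ x) (h1 : x < 1) :
    sgn (cos (2 * π * (3 * x))) = sgn (cos (2 * π * x)) ↔
      (x = 1 / 4 ∨ x = 3 / 4) ∨ (x < 1 / 12 ∨ (5 / 12 < x ∧ x < 7 / 12) ∨ 11 / 12 < x) := by
  have hfac : cos (2 * π * (3 * x)) = cos (2 * π * x) * (2 * cos (2 * π * (2 * x)) - 1) := by
    rw [show 2 * π * (3 * x) = 3 * (2 * π * x) by ring,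
      show 2 * π * (2 * x) = 2 * (2 * π * x) by ring, cos_three_mul, cos_two_mul]
    ring
  rw [hfac, sgn_mul_eq_sgn_iff]
  refine or_congr ?_ ?_
  · rcases le_total x (1 / 2) with hx | hx
    · rw [cos_two_pi_mul_eq_zero_iff (by rw [abs_le]; constructor <;> linarith), abs_of_nonneg h0]
      grind
    · rw [← cos_two_pi_mul_sub_intCast x 1, cos_two_pi_mul_eq_zero_iff
        (by push_cast; rw [abs_le]; constructor <;> linarith)]
      push_cast
      rw [abs_of_nonpos (by linarith)]
      grind
  · have hhalf : 0 < 2 * cos (2 * π * (2 * x)) - 1 ↔ 1 / 2 < cos (2 * π * (2 * x)) := by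
      constructor <;> intro h <;> linarith
    obtain ⟨m, hm, hiff⟩ : ∃ m : ℤ, |2 * x - m| ≤ 1 / 2 ∧ (|2 * x - m| < 1 / 6 ↔
        (x < 1 / 12 ∨ (5 / 12 < x ∧ x < 7 / 12) ∨ 11 / 12 < x)) := by
      rcases le_total x (1 / 4) with hx | hx
      · refine ⟨0, ?_, ?_⟩ <;> push_cast <;> grind
      rcases le_total x (3 / 4) with hx' | hx'
      · refine ⟨1, ?_, ?_⟩ <;> push_cast <;> grind
      · refine ⟨2, ?_, ?_⟩ <;> push_cast <;> grind
    rw [hhalf, ← cos_two_pi_mul_sub_intCast (2 * x) m, one_half_lt_cos_two_pi_mul_iff hm, hiff]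

/-- If the indicator of `P` is a linear combination of indicators of closed intervals, evaluated
along an equidistributed sequence, then `P` has the corresponding asymptotic frequency. -/
theorem EquidistributedMod1.tendsto_card_div {a : ℕ → ℝ} (ha : EquidistributedMod1 a)
    {ι : Type*} (s : Finset ι) (w c d : ι → ℝ)
    (hcd : ∀ i ∈ s, 0 ≤ c i ∧ c i ≤ d i ∧ d i ≤ 1) (P : ℕ → Prop)
    (hP : ∀ n, (if P n then (1 : ℝ) else 0) =
      ∑ i ∈ s, w i * if Int.fract (a n) ∈ Set.Icc (c i) (d i) then 1 else 0) :
    Tendsto (fun N : ℕ => (((Finset.range N).filter P).card : ℝ) / N) atTop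
      (nhds (∑ i ∈ s, w i * (d i - c i))) := by
  have hlim := tendsto_finsetSum s fun i hi =>
    (ha (c i) (d i) (hcd i hi).1 (hcd i hi).2.1 (hcd i hi).2.2).const_mul (w i)
  refine hlim.congr fun N => ?_
  simp only [Finset.natCast_card_filter, hP]
  rw [Finset.sum_comm, Finset.sum_div]
  exact Finset.sum_congr rfl fun i _ => by rw [← Finset.mul_sum, mul_div_assoc]

theorem sign_correlation_lower_bound_attained
    (y : ℝ) (hy : y ≠ 0) (μ : ℕ → ℝ)
    (hequi : EquidistributedMod1 (fun n => μ n * y)) :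
    Tendsto (fun N : ℕ =>
      (((Finset.range N).filter (fun n =>
        sgn (Real.cos (2 * π * (3 * (μ n * y)))) = sgn (Real.cos (2 * π * (μ n * y))))).card : ℝ) / N)
      atTop (nhds (1/3)) := by
  have key := hequi.tendsto_card_div (Finset.univ : Finset (Fin 9))
    ![1, 1, 1, -1, -1, -1, -1, 1, 1]
    ![0, 5 / 12, 11 / 12, 1 / 12, 5 / 12, 7 / 12, 11 / 12, 1 / 4, 3 / 4]
    ![1 / 12, 7 / 12, 1, 1 / 12, 5 / 12, 7 / 12, 11 / 12, 1 / 4, 3 / 4]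
    (by intro i _; fin_cases i <;> norm_num)
    (fun n => sgn (cos (2 * π * (3 * (μ n * y)))) = sgn (cos (2 * π * (μ n * y)))) ?_
  · convert key using 2
    simp [Fin.sum_univ_succ]
    norm_num
  · intro n
    have h0 := Int.fract_nonneg (μ n * y)
    have h1 := Int.fract_lt_one (μ n * y)
    have hiff := sgn_cos_three_mul_eq_iff h0 h1
    have hcos : cos (2 * π * Int.fract (μ n * y)) = cos (2 * π * (μ n * y)) :=
      cos_two_pi_mul_sub_intCast _ _
    have hcos' : cos (2 * π * (3 * Int.fract (μ n * y))) = cos (2 * π * (3 * (μ n * y))) := by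
      rw [← cos_two_pi_mul_sub_intCast (3 * (μ n * y)) (3 * ⌊μ n * y⌋), Int.fract]
      push_cast
      ring_nf
    rw [hcos, hcos'] at hiff
    simp only [hiff]
    generalize Int.fract (μ n * y) = x at h0 h1
    simp [Fin.sum_univ_succ]
    clear hiff hcos hcos' hequi
    grind (splits := 30)
end

section
/- Let y be a nonzero real number and let (μ_n) be a sequence of reals such that the sequence (μ_n · y) is equidistributed modulo 1. Then (1/N) · #{0 ≤ n < N : sgn(cos(2π(3μ_n y − 1/4))) = sgn(cos(2π(μ_n y − 1/4)))} → 2/3 as N → ∞. (This shows the upper bound 2/3 in the universality law for sign correlations is attained.) -/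
open Filter Real MeasureTheory
open scoped Classical

lemma sgn_of_pos_s3 {t : ℝ} (h : 0 < t) : sgn t = 1 := if_pos h

lemma sgn_of_neg {t : ℝ} (h : t < 0) : sgn t = -1 := by
  rw [sgn, if_neg h.not_gt, if_pos h]

lemma sgn_zero : sgn 0 = 0 := by simp [sgn]

lemma sgn_eq_zero_iff {t : ℝ} : sgn t = 0 ↔ t = 0 := by
  rcases lt_trichotomy t 0 with h | rfl | h
  · simp [sgn_of_neg h, h.ne]
  · simp [sgn_zero]
  · simp [sgn_of_pos_s3 h, h.ne']

lemma sgn_eq_one_iff {t : ℝ} : sgn t = 1 ↔ 0 < t := by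
  rcases lt_trichotomy t 0 with h | rfl | h
  · rw [sgn_of_neg h]
    exact iff_of_false (by norm_num) h.not_gt
  · simp [sgn_zero]
  · simp [sgn_of_pos_s3 h, h]

lemma sgn_sin_three_mul_eq_iff (θ : ℝ) :
    sgn (sin (3 * θ)) = sgn (sin θ) ↔ -1 / 2 < cos (2 * θ) := by
  have hfactor : sin (3 * θ) = (1 + 2 * cos (2 * θ)) * sin θ := by
    rw [sin_three_mul, cos_two_mul, cos_sq']
    ring
  rw [hfactor, sgn_mul]
  by_cases hs : sin θ = 0
  · have hcos : cos (2 * θ) = 1 := by rw [cos_two_mul, cos_sq', hs]; norm_num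
    simp only [hs, sgn_zero, mul_zero, hcos, true_iff]
    norm_num
  · rw [mul_eq_right₀ (mt sgn_eq_zero_iff.1 hs), sgn_eq_one_iff]
    constructor <;> intro h <;> linarith

lemma cos_two_pi_div_three : cos (2 * π / 3) = -1 / 2 := by
  rw [show 2 * π / 3 = π - π / 3 by ring, cos_pi_sub, cos_pi_div_three]
  norm_num

lemma neg_half_lt_cos_iff_of_mem_Icc {x : ℝ} (hx : x ∈ Set.Icc 0 π) :
    -1 / 2 < cos x ↔ x < 2 * π / 3 := by
  have hπ := pi_pos
  rw [← cos_two_pi_div_three]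
  exact strictAntiOn_cos.lt_iff_gt ⟨by positivity, by linarith⟩ hx

lemma neg_half_lt_cos_two_pi_mul_iff {s : ℝ} (h0 : 0 ≤ s) (h1 : s ≤ 1) :
    -1 / 2 < cos (2 * π * s) ↔ s ∉ Set.Icc (1 / 3 : ℝ) (2 / 3) := by
  have hπ := pi_pos
  rw [Set.mem_Icc, not_and_or, not_le, not_le]
  rcases le_total s (1 / 2) with h | h
  · rw [neg_half_lt_cos_iff_of_mem_Icc ⟨by positivity, by nlinarith⟩]
    constructor
    · intro hs
      left
      nlinarith
    · rintro (hs | hs)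
      · nlinarith
      · linarith
  · rw [← cos_two_pi_sub, neg_half_lt_cos_iff_of_mem_Icc ⟨by nlinarith, by nlinarith⟩]
    constructor
    · intro hs
      right
      nlinarith
    · rintro (hs | hs)
      · linarith
      · nlinarith

lemma neg_half_lt_cos_four_pi_mul_iff (x : ℝ) :
    -1 / 2 < cos (2 * (2 * π * x)) ↔
      Int.fract x ∉ Set.Icc (1 / 6 : ℝ) (1 / 3) ∧ Int.fract x ∉ Set.Icc (2 / 3 : ℝ) (5 / 6) := by
  have h0 := Int.fract_nonneg x
  have h1 := (Int.fract_lt_one x).le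
  have hcos : cos (2 * (2 * π * x)) = cos (2 * π * (2 * Int.fract x)) := by
    rw [← cos_sub_int_mul_two_pi _ (2 * ⌊x⌋), ← Int.self_sub_floor]
    push_cast
    ring_nf
  rw [hcos]
  rcases le_total (Int.fract x) (1 / 2) with h | h
  · rw [neg_half_lt_cos_two_pi_mul_iff (by linarith) (by linarith)]
    simp only [Set.mem_Icc]
    grind
  · rw [← cos_sub_two_pi,
      show 2 * π * (2 * Int.fract x) - 2 * π = 2 * π * (2 * Int.fract x - 1) by ring,
      neg_half_lt_cos_two_pi_mul_iff (by linarith) (by linarith)]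
    simp only [Set.mem_Icc]
    grind

lemma sgn_cos_eq_iff_fract (x : ℝ) :
    sgn (cos (2 * π * (3 * x - 1 / 4))) = sgn (cos (2 * π * (x - 1 / 4))) ↔
      Int.fract x ∉ Set.Icc (1 / 6 : ℝ) (1 / 3) ∧ Int.fract x ∉ Set.Icc (2 / 3 : ℝ) (5 / 6) := by
  rw [show 2 * π * (3 * x - 1 / 4) = 3 * (2 * π * x) - π / 2 by ring,
    show 2 * π * (x - 1 / 4) = 2 * π * x - π / 2 by ring, cos_sub_pi_div_two, cos_sub_pi_div_two,
    sgn_sin_three_mul_eq_iff, neg_half_lt_cos_four_pi_mul_iff]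

lemma card_filter_not_and_not {α : Type*} (s : Finset α) {p q : α → Prop}
    (hpq : ∀ a, p a → ¬ q a) :
    ((s.filter fun a => ¬ p a ∧ ¬ q a).card : ℝ) =
      s.card - (s.filter p).card - (s.filter q).card := by
  have hor : (s.filter fun a => p a ∨ q a).card = (s.filter p).card + (s.filter q).card := by
    rw [Finset.filter_or, Finset.card_union_of_disjoint]
    exact Finset.disjoint_filter.2 fun a _ => hpq a
  have hsum := Finset.card_filter_add_card_filter_not (s := s) (fun a => p a ∨ q a)
  simp only [not_or] at hsum
  rw [hor] at hsum
  rw [← hsum]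
  push_cast
  ring

theorem sign_correlation_upper_bound_attained
    (y : ℝ) (hy : y ≠ 0) (μ : ℕ → ℝ)
    (hequi : EquidistributedMod1 (fun n => μ n * y)) :
    Tendsto (fun N : ℕ =>
      (((Finset.range N).filter (fun n =>
        sgn (Real.cos (2 * π * (3 * (μ n * y) - 1/4))) =
          sgn (Real.cos (2 * π * (μ n * y - 1/4))))).card : ℝ) / N)
      atTop (nhds (2/3)) := by
  have hleft := hequi (1 / 6) (1 / 3) (by norm_num) (by norm_num) (by norm_num)
  have hright := hequi (2 / 3) (5 / 6) (by norm_num) (by norm_num) (by norm_num)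
  have hlim := (tendsto_const_nhds (x := (1 : ℝ))).sub hleft |>.sub hright
  rw [show (1 : ℝ) - (1 / 3 - 1 / 6) - (5 / 6 - 2 / 3) = 2 / 3 by norm_num] at hlim
  refine hlim.congr' ?_
  filter_upwards [eventually_ne_atTop 0] with N hN
  have hN' : (N : ℝ) ≠ 0 := Nat.cast_ne_zero.2 hN
  have hcard := card_filter_not_and_not (Finset.range N)
    (p := fun n => Int.fract (μ n * y) ∈ Set.Icc (1 / 6 : ℝ) (1 / 3))
    (q := fun n => Int.fract (μ n * y) ∈ Set.Icc (2 / 3 : ℝ) (5 / 6))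
    fun n hn hn' => by linarith [hn.2, hn'.1]
  simp only [sgn_cos_eq_iff_fract]
  have hdiv := congrArg (· / (N : ℝ)) hcard
  simp only [Finset.card_range, sub_div, div_self hN'] at hdiv
  convert hdiv.symm
end

section
/- Let V : ℝ → ℝ be an even, locally Lebesgue-integrable function with ess inf V > −∞ and V(x) → ∞ as |x| → ∞. Let (λ_n) be a sequence of positive reals with λ_n → ∞, and let w_n : ℝ → ℝ be twice differentiable functions satisfying w_n''(x) = 4π²(V(x) − λ_n)·w_n(x) for all x ∈ ℝ (i.e., −(1/4π²)w_n'' + V w_n = λ_n w_n). Assume: (H1) w_n is an even function when n is even and an odd function when n is odd; (H3) sgn(w_{2n}(0)) = (−1)^n and sgn(w'_{2n+1}(0)) = (−1)^n for all n. Set A_n := (w_n(0)² + w_n'(0)²/(4π²λ_n))^{1/2} (note A_n > 0 by (H3)). Then for every R > 0, sup_{|x| ≤ R} |w_n(x) − A_n · cos(2π(√λ_n · x − n/4))| / A_n → 0 as n → ∞; that is, the WKB asymptotic w_n(x) = (1 + o_n(1)) · A_n · cos(2π(√λ_n x − n/4)) holds uniformly on compact subsets of ℝ. -/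
open Filter Real MeasureTheory
open scoped Classical

/-- Variation of constants for `w'' = (q - k²) w`: on `[-R, R]` the solution stays close to the
free solution with the same initial data. -/
theorem abs_sub_free_solution_le {q w w' : ℝ → ℝ} (hq : LocallyIntegrable q volume) {k R M : ℝ}
    (hk : 0 < k) (hw : ∀ x, HasDerivAt w (w' x) x)
    (hw' : ∀ x, HasDerivAt w' ((q x - k ^ 2) * w x) x)
    (hM : ∀ x, |x| ≤ R → |w x| ≤ M) {x : ℝ} (hx : |x| ≤ R) :
    |w x - (w 0 * cos (k * x) + w' 0 / k * sin (k * x))| ≤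
      (∫ t in Set.Icc (-R) R, |q t|) * (M / k) := by
  have hderiv (t : ℝ) : HasDerivAt
      (fun t => w t * cos (k * (x - t)) + w' t / k * sin (k * (x - t)))
      (q t * (w t / k * sin (k * (x - t)))) t := by
    have hphase : HasDerivAt (fun t => k * (x - t)) (-k) t := by
      simpa using ((hasDerivAt_id t).const_sub x).const_mul k
    refine (((hw t).mul hphase.cos).add (((hw' t).div_const k).mul hphase.sin)).congr_deriv ?_
    field_simp
    ring
  have hwc : Continuous w := continuous_iff_continuousAt.2 fun t => (hw t).continuousAt
  have hmem {t : ℝ} (ht : t ∈ Set.uIoc 0 x) : |t| ≤ R := by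
    rw [Set.mem_uIoc] at ht
    rw [abs_le] at hx ⊢
    rcases ht with ht | ht <;> constructor <;> linarith [ht.1, ht.2]
  have hint : IntervalIntegrable (fun t => q t * (w t / k * sin (k * (x - t)))) volume 0 x :=
    (hq.integrableOn_isCompact isCompact_uIcc).intervalIntegrable.mul_continuousOn
      (by fun_prop)
  have hFTC := intervalIntegral.integral_eq_sub_of_hasDerivAt (fun t _ => hderiv t) hint
  simp only [sub_self, mul_zero, cos_zero, sin_zero, mul_one, add_zero, sub_zero] at hFTC
  rw [← hFTC, ← Real.norm_eq_abs]
  have hqIcc : IntegrableOn (fun t => |q t|) (Set.Icc (-R) R) volume :=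
    (hq.integrableOn_isCompact isCompact_Icc).abs
  have hsub : Set.uIoc 0 x ⊆ Set.Icc (-R) R := fun t ht => abs_le.1 (hmem ht)
  have hM0 : 0 ≤ M := (abs_nonneg _).trans (hM x hx)
  calc ‖∫ t in (0 : ℝ)..x, q t * (w t / k * sin (k * (x - t)))‖
      ≤ ∫ t in Set.uIoc 0 x, ‖q t * (w t / k * sin (k * (x - t)))‖ :=
        intervalIntegral.norm_integral_le_integral_norm_uIoc
    _ ≤ ∫ t in Set.uIoc 0 x, |q t| * (M / k) := by
        refine setIntegral_mono_on hint.def'.norm ((hqIcc.mono_set hsub).mul_const _)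
          measurableSet_uIoc fun t ht => ?_
        rw [Real.norm_eq_abs, abs_mul, abs_mul, abs_div, abs_of_pos hk]
        refine mul_le_mul_of_nonneg_left ?_ (abs_nonneg _)
        calc |w t| / k * |sin (k * (x - t))| ≤ |w t| / k * 1 := by
              gcongr; exact abs_sin_le_one _
          _ ≤ M / k := by rw [mul_one]; gcongr; exact hM t (hmem ht)
    _ ≤ ∫ t in Set.Icc (-R) R, |q t| * (M / k) :=
        setIntegral_mono_set (hqIcc.mul_const _)
          (Eventually.of_forall fun t => mul_nonneg (abs_nonneg _) (by positivity))
          hsub.eventuallyLE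
    _ = _ := integral_mul_const _ _

theorem eq_mul_abs_of_sgn_eq {t s : ℝ} (h : sgn t = s) : t = s * |t| := by
  subst h
  unfold sgn
  split_ifs with h1 h2
  · rw [abs_of_pos h1, one_mul]
  · rw [abs_of_neg h2]; ring
  · simp [le_antisymm (not_lt.1 h1) (not_lt.1 h2)]

theorem deriv_zero_eq_zero_of_even {f : ℝ → ℝ} {a : ℝ} (hf : HasDerivAt f a 0)
    (heven : ∀ x, f (-x) = f x) : a = 0 := by
  have h : HasDerivAt (fun x => f (-x)) (-a) 0 := by
    have h0 : HasDerivAt f a (-0) := by simpa using hf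
    exact (h0.comp (0 : ℝ) (hasDerivAt_neg (0 : ℝ))).congr_deriv (by simp)
  simp only [heven] at h
  linarith [hf.unique h]

/-- A solution satisfying the integral bound with constant `δ ≤ 1 / 2` is within `2 δ A` of the
free solution of amplitude `A`. -/
theorem abs_sub_le_of_sup_bound {f g : ℝ → ℝ} (hf : Continuous f) {R A δ : ℝ} (hδ : 0 ≤ δ)
    (hδ2 : δ ≤ 1 / 2) (hg : ∀ x, |g x| ≤ A)
    (h : ∀ M, (∀ x, |x| ≤ R → |f x| ≤ M) → ∀ x, |x| ≤ R → |f x - g x| ≤ δ * M)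
    {x : ℝ} (hx : |x| ≤ R) : |f x - g x| ≤ 2 * δ * A := by
  obtain ⟨y, hy, hymax⟩ := (isCompact_Icc (a := -R) (b := R)).exists_isMaxOn
    ⟨x, abs_le.1 hx⟩ hf.abs.continuousOn
  have hM : ∀ x, |x| ≤ R → |f x| ≤ |f y| := fun z hz => hymax (abs_le.1 hz)
  have hbound := h _ hM
  have hy1 := hbound y (abs_le.2 hy)
  have htri : |f y| ≤ |f y - g y| + |g y| := by
    simpa using abs_add_le (f y - g y) (g y)
  have hfy : |f y| ≤ 2 * A := by nlinarith [abs_nonneg (f y), hg y]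
  nlinarith [hbound x hx]

theorem wkb_asymptotic
    (V : ℝ → ℝ) (hVloc : LocallyIntegrable V volume)
    (hVeven : ∀ x, V (-x) = V x)
    (hVbelow : ∃ c : ℝ, ∀ᵐ x : ℝ, c ≤ V x)
    (hVinfty : Tendsto V (cocompact ℝ) atTop)
    (lam : ℕ → ℝ) (hlampos : ∀ n, 0 < lam n) (hlam : Tendsto lam atTop atTop)
    (w w' : ℕ → ℝ → ℝ)
    (hw' : ∀ n x, HasDerivAt (w n) (w' n x) x)
    (hODE : ∀ n x, HasDerivAt (w' n) (4 * π ^ 2 * (V x - lam n) * w n x) x)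
    (H1even : ∀ n, Even n → ∀ x, w n (-x) = w n x)
    (H1odd : ∀ n, Odd n → ∀ x, w n (-x) = - w n x)
    (H3even : ∀ n : ℕ, sgn (w (2 * n) 0) = (-1 : ℝ) ^ n)
    (H3odd : ∀ n : ℕ, sgn (w' (2 * n + 1) 0) = (-1 : ℝ) ^ n) :
    ∀ R > (0 : ℝ), ∀ ε > (0 : ℝ), ∃ N : ℕ, ∀ n ≥ N, ∀ x : ℝ, |x| ≤ R →
      |w n x - Real.sqrt ((w n 0) ^ 2 + (w' n 0) ^ 2 / (4 * π ^ 2 * lam n)) *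
          Real.cos (2 * π * (Real.sqrt (lam n) * x - (n : ℝ) / 4))| ≤
        ε * Real.sqrt ((w n 0) ^ 2 + (w' n 0) ^ 2 / (4 * π ^ 2 * lam n)) := by
  intro R _ ε hε
  set C := ∫ t in Set.Icc (-R) R, |4 * π ^ 2 * V t| with hC
  have hC0 : 0 ≤ C := integral_nonneg fun t => abs_nonneg _
  have hq : LocallyIntegrable (fun t => 4 * π ^ 2 * V t) volume := hVloc.smul (4 * π ^ 2)
  have hktend : Tendsto (fun n => 2 * π * √(lam n)) atTop atTop :=
    (tendsto_sqrt_atTop.comp hlam).const_mul_atTop (by positivity)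
  have hδtend : Tendsto (fun n => C / (2 * π * √(lam n))) atTop (nhds 0) :=
    hktend.const_div_atTop C
  have hev := (hδtend.eventually_le_const (show (0 : ℝ) < 1 / 2 by norm_num)).and
    (hδtend.eventually_le_const (show 0 < ε / 2 by positivity))
  obtain ⟨N, hN⟩ := eventually_atTop.1 hev
  refine ⟨N, fun n hn x hx => ?_⟩
  obtain ⟨hδ2, hδε⟩ := hN n hn
  have hlamn := hlampos n
  set k := 2 * π * √(lam n) with hk
  have hkpos : 0 < k := by positivity
  have hk2 : 4 * π ^ 2 * lam n = k ^ 2 := by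
    rw [hk, mul_pow, sq_sqrt hlamn.le]; ring
  set A := √(w n 0 ^ 2 + w' n 0 ^ 2 / (4 * π ^ 2 * lam n)) with hA
  have hA0 : 0 ≤ A := sqrt_nonneg _
  have hfree (y : ℝ) : w n 0 * cos (k * y) + w' n 0 / k * sin (k * y) =
      A * cos (2 * π * (√(lam n) * y - n / 4)) := by
    rw [hk2] at hA
    obtain ⟨m, rfl | rfl⟩ := n.even_or_odd'
    · have h0 := deriv_zero_eq_zero_of_even (hw' _ 0) (H1even _ (even_two_mul m))
      have hAeq : A = |w (2 * m) 0| := by rw [hA, h0]; simp [sqrt_sq_eq_abs]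
      have harg : 2 * π * (√(lam (2 * m)) * y - (2 * m : ℕ) / 4) = k * y - m * π := by
        rw [hk]; push_cast; ring
      rw [harg, cos_sub_nat_mul_pi, hAeq, h0]
      nth_rewrite 1 [eq_mul_abs_of_sgn_eq (H3even m)]
      ring
    · have h0 : w (2 * m + 1) 0 = 0 := by
        have := H1odd _ (odd_two_mul_add_one m) 0
        rw [neg_zero] at this
        linarith
      have hAeq : A = |w' (2 * m + 1) 0| / k := by
        rw [hA, h0, ← div_pow, zero_pow two_ne_zero, zero_add, sqrt_sq_eq_abs, abs_div,
          abs_of_pos hkpos]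
      have harg : 2 * π * (√(lam (2 * m + 1)) * y - (2 * m + 1 : ℕ) / 4) =
          k * y - π / 2 - m * π := by
        rw [hk]; push_cast; ring
      rw [harg, cos_sub_nat_mul_pi, cos_sub_pi_div_two, hAeq, h0]
      nth_rewrite 1 [eq_mul_abs_of_sgn_eq (H3odd m)]
      ring
  refine (abs_sub_le_of_sup_bound (R := R) (A := A) (δ := C / k)
    (g := fun y => A * cos (2 * π * (√(lam n) * y - n / 4)))
    (continuous_iff_continuousAt.2 fun t => (hw' n t).continuousAt) (by positivity) hδ2
    (fun y => ?_) (fun M hM y hy => ?_) hx).trans ?_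
  · rw [abs_mul, abs_of_nonneg hA0]
    exact mul_le_of_le_one_right hA0 (abs_cos_le_one _)
  · rw [← hfree]
    refine (abs_sub_free_solution_le hq hkpos (hw' n) (fun t => ?_) hM hy).trans_eq ?_
    · exact (hODE n t).congr_deriv (by rw [← hk2]; ring)
    · rw [← hC]; ring
  · exact mul_le_mul_of_nonneg_right (by linarith) hA0
end

section
/- Let V : ℝ → ℝ be an even, locally Lebesgue-integrable function with ess inf V > −∞ and V(x) → ∞ as |x| → ∞. Let (λ_n) be a sequence of positive reals with λ_n → ∞, and let w_n : ℝ → ℝ be twice differentiable functions satisfying w_n''(x) = 4π²(V(x) − λ_n)·w_n(x) for all x ∈ ℝ. Assume: (H1) w_n is even when n is even and odd when n is odd; (H2) for every nonzero real x, both sequences (√λ_{2n} · x)_n and (√λ_{2n+1} · x)_n are equidistributed modulo 1; (H3) sgn(w_{2n}(0)) = (−1)^n and sgn(w'_{2n+1}(0)) = (−1)^n for all n. Let x, y be distinct real numbers with q·x = p·y for some nonzero coprime integers p, q. Then (1/N) · #{0 ≤ n < N : sgn(w_n(x)) = sgn(w_n(y))} converges as N → ∞, to 1/2 + 1/(2pq)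 if p ≡ q ≡ 1 (mod 4) or p ≡ q ≡ 3 (mod 4), and to 1/2 otherwise. -/
open Filter Real MeasureTheory
open scoped Classical

/-- The Cesàro means of `f` converge to `L`. -/
def HasMean (f : ℕ → ℝ) (L : ℝ) : Prop :=
  Tendsto (fun N : ℕ => (∑ n ∈ Finset.range N, f n) / N) atTop (nhds L)

namespace HasMean

lemma add {f g : ℕ → ℝ} {A B : ℝ} (hf : HasMean f A) (hg : HasMean g B) :
    HasMean (fun n => f n + g n) (A + B) := by
  refine (Tendsto.add hf hg).congr fun N => ?_
  rw [Finset.sum_add_distrib, add_div]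

lemma const_mul {f : ℕ → ℝ} {A : ℝ} (c : ℝ) (hf : HasMean f A) :
    HasMean (fun n => c * f n) (c * A) := by
  refine (Tendsto.const_mul c hf).congr fun N => ?_
  rw [← Finset.mul_sum, mul_div_assoc]

lemma of_tendsto {f : ℕ → ℝ} {A : ℝ} (hf : Tendsto f atTop (nhds A)) : HasMean f A := by
  refine hf.cesaro.congr fun N => ?_
  rw [div_eq_inv_mul]

lemma const (A : ℝ) : HasMean (fun _ => A) A := of_tendsto tendsto_const_nhds

lemma sum {ι : Type*} (s : Finset ι) {f : ι → ℕ → ℝ} {A : ι → ℝ}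
    (h : ∀ i ∈ s, HasMean (f i) (A i)) :
    HasMean (fun n => ∑ i ∈ s, f i n) (∑ i ∈ s, A i) := by
  induction s using Finset.induction_on with
  | empty => simpa using const 0
  | insert a s ha ih =>
    simp only [Finset.sum_insert ha]
    exact (h a (Finset.mem_insert_self a s)).add
      (ih fun i hi => h i (Finset.mem_insert_of_mem hi))

/-- Changing a sequence on a set of arbitrarily small upper density keeps its mean. -/
lemma of_approx {f g : ℕ → ℝ} {L : ℝ} (hg : HasMean g L)
    (h : ∀ ε > 0, ∃ b : ℕ → ℝ, ∃ c < ε, HasMean b c ∧ ∀ᶠ n in atTop, |f n - g n| ≤ b n) :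
    HasMean f L := by
  suffices hd : HasMean (fun n => f n - g n) 0 by
    have := hg.add hd
    simpa using this
  unfold HasMean
  rw [Metric.tendsto_atTop']
  intro ε hε
  obtain ⟨b, c, hc, hb, hle⟩ := h ε hε
  have hz : HasMean (fun n => max (|f n - g n| - b n) 0) 0 := by
    refine of_tendsto (tendsto_const_nhds.congr' ?_)
    filter_upwards [hle] with n hn
    rw [max_eq_right (by linarith)]
  have hs := hb.add hz
  rw [add_zero] at hs
  obtain ⟨N₀, hN₀⟩ := eventually_atTop.1 (Tendsto.eventually_lt_const hc hs)
  refine ⟨N₀, fun N hN => ?_⟩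
  have h₁ := hN₀ N hN.le
  rw [Real.dist_eq, sub_zero, abs_div, Nat.abs_cast]
  refine lt_of_le_of_lt ?_ h₁
  gcongr
  refine (Finset.abs_sum_le_sum_abs _ _).trans (Finset.sum_le_sum fun n _ => ?_)
  have := le_max_left (|f n - g n| - b n) 0
  linarith

lemma interleave {f : ℕ → ℝ} {A B : ℝ} (hA : HasMean (fun n => f (2 * n)) A)
    (hB : HasMean (fun n => f (2 * n + 1)) B) : HasMean f ((A + B) / 2) := by
  have hsum : ∀ M : ℕ, ∑ n ∈ Finset.range (2 * M), f n =
      ∑ n ∈ Finset.range M, f (2 * n) + ∑ n ∈ Finset.range M, f (2 * n + 1) := by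
    intro M
    induction M with
    | zero => simp
    | succ M ih =>
      rw [show 2 * (M + 1) = 2 * M + 1 + 1 by ring, Finset.sum_range_succ, Finset.sum_range_succ,
        ih, Finset.sum_range_succ, Finset.sum_range_succ]
      ring
  have hodd : ∀ M : ℕ, ∑ n ∈ Finset.range (2 * M + 1), f n =
      ∑ n ∈ Finset.range (M + 1), f (2 * n) + ∑ n ∈ Finset.range M, f (2 * n + 1) := by
    intro M
    rw [Finset.sum_range_succ, hsum, Finset.sum_range_succ]
    ring
  have hev : Tendsto (fun M : ℕ => (∑ n ∈ Finset.range (2 * M), f n) / ((2 * M : ℕ) : ℝ)) atTop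
      (nhds ((A + B) / 2)) := by
    refine ((Tendsto.add hA hB).div_const 2).congr fun M => ?_
    rw [hsum]
    push_cast
    rw [← add_div, div_div, mul_comm (M : ℝ) 2]
  have hlim : Tendsto (fun M : ℕ => (1 : ℝ) / ((M : ℝ) + 1)) atTop (nhds 0) :=
    tendsto_one_div_add_atTop_nhds_zero_nat
  have hod : Tendsto (fun M : ℕ => (∑ n ∈ Finset.range (2 * M + 1), f n) / ((2 * M + 1 : ℕ) : ℝ))
      atTop (nhds ((A + B) / 2)) := by
    have hA' := hA.comp (tendsto_add_atTop_nat 1)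
    have hr : Tendsto (fun M : ℕ => 1 / (2 - 1 / ((M : ℝ) + 1))) atTop (nhds (1 / (2 - 0))) :=
      tendsto_const_nhds.div (tendsto_const_nhds.sub hlim) (by norm_num)
    have hq : Tendsto (fun M : ℕ => (1 - 1 / ((M : ℝ) + 1))) atTop (nhds (1 - 0)) :=
      tendsto_const_nhds.sub hlim
    have := (hA'.add (Tendsto.mul hB hq)).mul hr
    rw [show (A + B * (1 - 0)) * (1 / (2 - 0)) = (A + B) / 2 by ring] at this
    refine this.congr fun M => ?_
    rw [hodd]
    have hM : (M : ℝ) + 1 ≠ 0 := by positivity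
    have hM' : 2 * (M : ℝ) + 1 ≠ 0 := by positivity
    have e₁ : (1 : ℝ) - 1 / ((M : ℝ) + 1) = M / ((M : ℝ) + 1) := by field_simp; ring
    have e₂ : (2 : ℝ) - 1 / ((M : ℝ) + 1) = (2 * M + 1) / ((M : ℝ) + 1) := by field_simp; ring
    simp only [Function.comp]
    rw [e₁, e₂]
    push_cast
    rcases Nat.eq_zero_or_pos M with rfl | hMp
    · simp
    · have : (M : ℝ) ≠ 0 := by positivity
      field_simp
  unfold HasMean
  rw [tendsto_atTop_nhds] at *
  intro U hU hUo
  obtain ⟨N₁, h₁⟩ := hev U hU hUo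
  obtain ⟨N₂, h₂⟩ := hod U hU hUo
  refine ⟨2 * (N₁ + N₂) + 1, fun N hN => ?_⟩
  rcases Nat.even_or_odd' N with ⟨M, rfl | rfl⟩
  · exact h₁ M (by omega)
  · exact h₂ M (by omega)

end HasMean

lemma EquidistributedMod1.hasMean_Icc {a : ℕ → ℝ} (ha : EquidistributedMod1 a) {c d : ℝ}
    (hc : 0 ≤ c) (hcd : c ≤ d) (hd : d ≤ 1) :
    HasMean (fun n => if Int.fract (a n) ∈ Set.Icc c d then 1 else 0) (d - c) := by
  refine (ha c d hc hcd hd).congr fun N => ?_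
  rw [Finset.sum_boole]

/-- Means of step functions with period one along an equidistributed sequence. -/
lemma EquidistributedMod1.hasMean_step {a : ℕ → ℝ} (ha : EquidistributedMod1 a) {K : ℕ}
    (hK : 0 < K) {G : ℤ → ℝ} (hG : Function.Periodic G K) :
    HasMean (fun n => G ⌊(K : ℝ) * a n⌋) ((∑ k ∈ Finset.range K, G k) / K) := by
  have hK' : (0 : ℝ) < K := by exact_mod_cast hK
  have hcell : ∀ k ∈ Finset.range K, HasMean (fun n =>
      G k * ((if Int.fract (a n) ∈ Set.Icc ((k : ℝ) / K) ((k + 1 : ℝ) / K) then 1 else 0) +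
        (-1) * (if Int.fract (a n) ∈ Set.Icc ((k + 1 : ℝ) / K) ((k + 1 : ℝ) / K) then 1 else 0)))
      (G k * (1 / K)) := by
    intro k hk
    have hk1 : (k + 1 : ℝ) / K ≤ 1 := by
      rw [div_le_one hK']
      exact_mod_cast Finset.mem_range.1 hk
    have h1 := ha.hasMean_Icc (c := (k : ℝ) / K) (d := (k + 1 : ℝ) / K) (by positivity)
      (by gcongr; linarith) hk1
    have h2 := ha.hasMean_Icc (c := (k + 1 : ℝ) / K) (d := (k + 1 : ℝ) / K) (by positivity)
      le_rfl hk1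
    convert (h1.add (h2.const_mul (-1))).const_mul (G k) using 1
    ring
  have hs := HasMean.sum _ hcell
  rw [← Finset.sum_mul, mul_one_div] at hs
  convert hs using 2 with n
  have hfl : ⌊(K : ℝ) * a n⌋ = ⌊(K : ℝ) * Int.fract (a n)⌋ + ⌊a n⌋ * (K : ℤ) := by
    have : (K : ℝ) * a n = (K : ℝ) * Int.fract (a n) + ((⌊a n⌋ * (K : ℤ) : ℤ) : ℝ) := by
      conv_lhs => rw [← Int.fract_add_floor (a n)]
      push_cast
      ring
    rw [this, Int.floor_add_intCast]
  have hper : G ⌊(K : ℝ) * a n⌋ = G ⌊(K : ℝ) * Int.fract (a n)⌋ := by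
    rw [hfl]
    exact hG.int_mul _ _
  rw [hper]
  set u := Int.fract (a n)
  have hu0 : 0 ≤ u := Int.fract_nonneg _
  have hu1 : u < 1 := Int.fract_lt_one _
  obtain ⟨m, hm⟩ := Int.eq_ofNat_of_zero_le (Int.floor_nonneg.2 (by positivity : 0 ≤ (K : ℝ) * u))
  have hm' := Int.floor_eq_iff.1 hm
  simp only [Int.cast_natCast] at hm'
  rw [hm, Finset.sum_eq_single_of_mem m]
  · rw [if_pos, if_neg]
    · simp
    · rw [Set.Icc_self, Set.mem_singleton_iff, eq_div_iff hK'.ne']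
      nlinarith [hm'.2]
    · rw [Set.mem_Icc, div_le_iff₀ hK', le_div_iff₀ hK']
      constructor <;> linarith [hm'.1, hm'.2]
  · rw [Finset.mem_range]
    have : (m : ℝ) < K := by nlinarith [hm'.1]
    exact_mod_cast this
  · intro k _ hkm
    simp only [Set.Icc_self, Set.mem_singleton_iff, Set.mem_Icc, div_le_iff₀ hK', le_div_iff₀ hK',
      eq_div_iff hK'.ne']
    rcases lt_or_gt_of_ne hkm with h | h
    · have h' : (k : ℝ) + 1 ≤ m := by exact_mod_cast h
      by_cases he : u * K = k + 1
      · rw [if_pos ⟨by linarith, he.le⟩, if_pos he]; ring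
      · rw [if_neg, if_neg he]
        · ring
        · rintro ⟨-, h2⟩
          exact he (le_antisymm h2 (by linarith [hm'.1]))
    · have h' : (m : ℝ) + 1 ≤ k := by exact_mod_cast h
      rw [if_neg, if_neg]
      · ring
      · intro h2; linarith [hm'.2]
      · rintro ⟨h1, -⟩; linarith [hm'.2]

/-- Perturbation bound for `w'' = (U - κ²) w` against the free solution with the same data at `0`. -/
lemma exists_oscillator_bound {U : ℝ → ℝ} (hU : LocallyIntegrable U volume) {X : ℝ} (hX : 0 ≤ X) :
    ∃ A : ℝ, 0 ≤ A ∧ ∀ (κ M : ℝ) (w w' : ℝ → ℝ), 0 < κ → 2 * A ≤ κ →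
      (∀ s, HasDerivAt w (w' s) s) → (∀ s, HasDerivAt w' ((U s - κ ^ 2) * w s) s) →
      (∀ s, |w 0 * cos (κ * s) + w' 0 / κ * sin (κ * s)| ≤ M) →
      ∀ s, |s| ≤ X →
        |w s - (w 0 * cos (κ * s) + w' 0 / κ * sin (κ * s))| ≤ 2 * A * M / κ := by
  have hint : ∀ a b : ℝ, IntervalIntegrable U volume a b := fun a b =>
    (hU.integrableOn_isCompact isCompact_uIcc).intervalIntegrable
  refine ⟨∫ s in (-X)..X, |U s|, intervalIntegral.integral_nonneg (by linarith)
    fun _ _ => abs_nonneg _, ?_⟩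
  set A := ∫ s in (-X)..X, |U s|
  intro κ M w w' hκ hA hw hw' hM
  have hwc : Continuous w := continuous_iff_continuousAt.2 fun s => (hw s).continuousAt
  have hrep : ∀ z : ℝ, w z - (w 0 * cos (κ * z) + w' 0 / κ * sin (κ * z)) =
      ∫ s in (0 : ℝ)..z, U s * (w s * sin (κ * (z - s)) / κ) := by
    intro z
    have hc : ∀ s, HasDerivAt (fun s => κ * (z - s)) (-κ) s := fun s => by
      simpa using ((hasDerivAt_id s).const_sub z).const_mul κ
    have hd : ∀ s, HasDerivAt
        (fun s => w s * cos (κ * (z - s)) + w' s / κ * sin (κ * (z - s)))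
        (U s * (w s * sin (κ * (z - s)) / κ)) s := fun s => by
      have h := ((hw s).mul (hc s).cos).add (((hw' s).div_const κ).mul (hc s).sin)
      refine h.congr_deriv ?_
      field_simp
      ring
    rw [intervalIntegral.integral_eq_sub_of_hasDerivAt (fun s _ => hd s)]
    · simp
    · exact (hint 0 z).mul_continuousOn (by fun_prop)
  obtain ⟨s₀, hs₀, hmax⟩ := isCompact_Icc.exists_isMaxOn
    (Set.nonempty_Icc.2 (by linarith : -X ≤ X)) (continuous_abs.comp hwc).continuousOn
  have hbound : ∀ z, |z| ≤ X →
      |w z - (w 0 * cos (κ * z) + w' 0 / κ * sin (κ * z))| ≤ A * |w s₀| / κ := by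
    intro z hz
    have hz' := abs_le.1 hz
    have hsub : Set.uIoc 0 z ⊆ Set.Ioc (-X) X := by
      intro s hs
      rcases Set.mem_uIoc.1 hs with h | h <;> constructor <;> linarith [h.1, h.2]
    have hUa : IntegrableOn (fun s => |U s| * (|w s₀| / κ)) (Set.Ioc (-X) X) := by
      have := ((hint (-X) X).abs.mul_const (|w s₀| / κ)).1
      exact this
    rw [hrep z, ← Real.norm_eq_abs]
    calc ‖∫ s in (0 : ℝ)..z, U s * (w s * sin (κ * (z - s)) / κ)‖
        ≤ ∫ s in Set.uIoc 0 z, ‖U s * (w s * sin (κ * (z - s)) / κ)‖ :=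
          intervalIntegral.norm_integral_le_integral_norm_uIoc
      _ ≤ ∫ s in Set.uIoc 0 z, |U s| * (|w s₀| / κ) := by
          refine setIntegral_mono_on ?_ (hUa.mono_set hsub) measurableSet_uIoc fun s hs => ?_
          · have := ((hint 0 z).mul_continuousOn
              (g := fun s => w s * sin (κ * (z - s)) / κ) (by fun_prop)).norm
            exact (intervalIntegrable_iff.1 this)
          · rw [norm_mul, Real.norm_eq_abs, Real.norm_eq_abs, abs_div, abs_mul, abs_of_pos hκ]
            have h1 : |w s| ≤ |w s₀| := hmax (Set.Ioc_subset_Icc_self (hsub hs))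
            have h2 := abs_sin_le_one (κ * (z - s))
            gcongr
            nlinarith [abs_nonneg (w s)]
      _ ≤ ∫ s in Set.Ioc (-X) X, |U s| * (|w s₀| / κ) :=
          setIntegral_mono_set hUa (ae_of_all _ fun s => by positivity) hsub.eventuallyLE
      _ = A * |w s₀| / κ := by
          rw [← intervalIntegral.integral_of_le (by linarith), intervalIntegral.integral_mul_const,
            mul_div_assoc]
  have hs₀' : |s₀| ≤ X := abs_le.2 hs₀
  have hA0 : 0 ≤ A := intervalIntegral.integral_nonneg (by linarith) fun _ _ => abs_nonneg _
  have hw0 : |w s₀| ≤ 2 * M := by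
    have h1 := hbound s₀ hs₀'
    have h2 := hM s₀
    have h3 : A * |w s₀| / κ ≤ |w s₀| / 2 := by
      rw [div_le_div_iff₀ hκ two_pos]
      nlinarith [abs_nonneg (w s₀)]
    have h4 := abs_sub_abs_le_abs_sub (w s₀)
      (w 0 * cos (κ * s₀) + w' 0 / κ * sin (κ * s₀))
    linarith
  intro z hz
  refine (hbound z hz).trans ?_
  rw [mul_comm 2 A, mul_assoc]
  gcongr

lemma sgn_mul_of_close {c v r ε : ℝ} (hv : |v - c * r| ≤ ε * |c|) (hr : ε < |r|) :
    sgn v = sgn c * sgn r := by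
  rcases lt_trichotomy c 0 with hc | rfl | hc
  · rw [abs_of_neg hc, abs_le] at hv
    rcases lt_trichotomy r 0 with h | rfl | h
    · rw [abs_of_neg h] at hr
      have : 0 < v := by nlinarith [hv.1]
      simp [sgn, this, hc, h, hc.le.not_gt, h.le.not_gt]
    · have : v = 0 := by
        simp at hr
        nlinarith [hv.1, hv.2]
      simp [sgn, this]
    · rw [abs_of_pos h] at hr
      have : v < 0 := by nlinarith [hv.2]
      simp [sgn, this, hc, h, hc.le.not_gt, this.le.not_gt]
  · have : v = 0 := by simpa using hv
    simp [sgn, this]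
  · rw [abs_of_pos hc, abs_le] at hv
    rcases lt_trichotomy r 0 with h | rfl | h
    · rw [abs_of_neg h] at hr
      have : v < 0 := by nlinarith [hv.2]
      simp [sgn, this, hc, h, h.le.not_gt, this.le.not_gt]
    · have : v = 0 := by
        simp at hr
        nlinarith [hv.1, hv.2]
      simp [sgn, this]
    · rw [abs_of_pos h] at hr
      have : 0 < v := by nlinarith [hv.1]
      simp [sgn, this, hc, h]

section Asymptotics

variable {V : ℝ → ℝ} (hV : LocallyIntegrable V volume) {l : ℕ → ℝ} (hlpos : ∀ n, 0 < l n)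
  (hl : Tendsto l atTop atTop) {w w' : ℕ → ℝ → ℝ} (hw : ∀ n x, HasDerivAt (w n) (w' n x) x)
  (hODE : ∀ n x, HasDerivAt (w' n) (4 * π ^ 2 * (V x - l n) * w n x) x)

include hV hlpos hl hw hODE

lemma eventually_close_free_solution (x : ℝ) {ε : ℝ} (hε : 0 < ε) :
    ∀ᶠ n in atTop, ∀ M, (∀ s, |w n 0 * cos (2 * π * √(l n) * s) +
        w' n 0 / (2 * π * √(l n)) * sin (2 * π * √(l n) * s)| ≤ M) →
      |w n x - (w n 0 * cos (2 * π * √(l n) * x) +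
        w' n 0 / (2 * π * √(l n)) * sin (2 * π * √(l n) * x))| ≤ ε * M := by
  obtain ⟨A, hA, h⟩ := exists_oscillator_bound (hV.smul (4 * π ^ 2)) (abs_nonneg x)
  have hκ : Tendsto (fun n => 2 * π * √(l n)) atTop atTop :=
    (tendsto_sqrt_atTop.comp hl).const_mul_atTop (by positivity)
  filter_upwards [hκ.eventually_ge_atTop (2 * A), hκ.eventually_ge_atTop (2 * A / ε)]
    with n h1 h2 M hM
  have hpos : 0 < 2 * π * √(l n) := by have := Real.sqrt_pos.2 (hlpos n); positivity
  have hM0 : 0 ≤ M := (abs_nonneg _).trans (hM 0)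
  refine (h _ M _ _ hpos h1 (hw n) (fun s => (hODE n s).congr_deriv ?_) hM x le_rfl).trans ?_
  · rw [mul_pow, Real.sq_sqrt (hlpos n).le]
    simp only [Pi.smul_apply, smul_eq_mul]
    ring
  · rw [div_le_iff₀ hε] at h2
    rw [div_le_iff₀ hpos]
    nlinarith

lemma eventually_sgn_eq_cos (h0 : ∀ n, w' n 0 = 0) (x : ℝ) {ε : ℝ} (hε : 0 < ε) :
    ∀ᶠ n in atTop, ε < |cos (2 * π * √(l n) * x)| →
      sgn (w n x) = sgn (w n 0) * sgn (cos (2 * π * √(l n) * x)) := by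
  filter_upwards [eventually_close_free_solution hV hlpos hl hw hODE x hε] with n hn hc
  simp only [h0, zero_div, zero_mul, add_zero] at hn
  refine sgn_mul_of_close (hn |w n 0| fun s => ?_) hc
  rw [abs_mul]
  exact mul_le_of_le_one_right (abs_nonneg _) (abs_cos_le_one _)

lemma eventually_sgn_eq_sin (h0 : ∀ n, w n 0 = 0) (x : ℝ) {ε : ℝ} (hε : 0 < ε) :
    ∀ᶠ n in atTop, ε < |sin (2 * π * √(l n) * x)| →
      sgn (w n x) = sgn (w' n 0) * sgn (sin (2 * π * √(l n) * x)) := by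
  filter_upwards [eventually_close_free_solution hV hlpos hl hw hODE x hε] with n hn hc
  simp only [h0, zero_mul, zero_add] at hn
  have hpos : 0 < 2 * π * √(l n) := by have := Real.sqrt_pos.2 (hlpos n); positivity
  have hsgn : sgn (w' n 0 / (2 * π * √(l n))) = sgn (w' n 0) := by
    simp [sgn, div_pos_iff_of_pos_right hpos, div_lt_iff₀ hpos]
  rw [← hsgn]
  refine sgn_mul_of_close (hn |w' n 0 / (2 * π * √(l n))| fun s => ?_) hc
  rw [abs_mul]
  exact mul_le_of_le_one_right (abs_nonneg _) (abs_sin_le_one _)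

end Asymptotics

lemma neg_one_zpow_eq_of_even_sub {m n : ℤ} (h : Even (m - n)) : (-1 : ℝ) ^ m = (-1) ^ n := by
  rw [← sub_add_cancel m n, zpow_add₀ (by norm_num), h.neg_one_zpow, one_mul]

lemma Function.Periodic.sum_range_add {G : ℤ → ℝ} {K : ℕ} (hG : Function.Periodic G K) (c : ℕ) :
    ∑ k ∈ Finset.range K, G (k + c) = ∑ k ∈ Finset.range K, G k := by
  induction c with
  | zero => simp
  | succ c ih =>
    rw [← ih]
    have h1 := Finset.sum_range_succ (fun k : ℕ => G (k + c)) K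
    rw [Finset.sum_range_succ' (fun k : ℕ => G (k + c)) K] at h1
    have h2 : G ((K : ℤ) + c) = G ((0 : ℕ) + c) := by
      rw [add_comm, hG]
      simp
    rw [h2] at h1
    have h3 := add_right_cancel h1
    rw [← h3]
    refine Finset.sum_congr rfl fun k _ => ?_
    congr 1
    push_cast
    ring

lemma sum_range_mul_of_coprime {P Q : ℕ} (hP : 0 < P) (hQ : 0 < Q) (h : P.Coprime Q)
    (f g : ℕ → ℝ) :
    ∑ j ∈ Finset.range (P * Q), f (j % P) * g (j % Q) =
      (∑ a ∈ Finset.range P, f a) * ∑ b ∈ Finset.range Q, g b := by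
  rw [Finset.sum_mul_sum, ← Finset.sum_product']
  have hinj : Set.InjOn (fun j => (j % P, j % Q)) (Finset.range (P * Q) : Set ℕ) := by
    intro i hi j hj hij
    rw [Finset.mem_coe, Finset.mem_range] at hi hj
    obtain ⟨h1, h2⟩ := Prod.mk.inj hij
    exact Nat.ModEq.eq_of_lt_of_lt ((Nat.modEq_and_modEq_iff_modEq_mul h).1 ⟨h1, h2⟩) hi hj
  rw [← Finset.sum_image (f := fun x : ℕ × ℕ => f x.1 * g x.2) hinj]
  congr 1
  refine Finset.eq_of_subset_of_card_le ?_ ?_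
  · intro x hx
    obtain ⟨j, -, rfl⟩ := Finset.mem_image.1 hx
    simp [Nat.mod_lt _ hP, Nat.mod_lt _ hQ]
  · rw [Finset.card_image_of_injOn hinj]
    simp

lemma sum_range_neg_one_pow {P : ℕ} (h : Odd P) : ∑ a ∈ Finset.range P, (-1 : ℝ) ^ a = 1 := by
  rw [neg_one_geom_sum, if_neg (Nat.not_even_iff_odd.2 h)]

lemma Int.ediv_odd_emod_two {j m : ℤ} (hm : Odd m) : Even (j / m - (j + j % m)) := by
  obtain ⟨r, rfl⟩ := hm
  have := Int.mul_ediv_add_emod j (2 * r + 1)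
  set d := j / (2 * r + 1)
  set e := j % (2 * r + 1)
  rw [← this]
  exact ⟨-(r * d) - e, by ring⟩

/-- The sign pattern of `sin (2πPu) sin (2πQu)` on the cells of the grid with mesh `1 / (4PQ)`. -/
noncomputable def sinPattern (P Q : ℕ) (m : ℤ) : ℝ :=
  (-1) ^ (m / (2 * Q : ℤ) + m / (2 * P : ℤ))

/-- The sign pattern of `cos (2πPu) cos (2πQu)` on the cells of the grid with mesh `1 / (4PQ)`. -/
noncomputable def cosPattern (P Q : ℕ) (m : ℤ) : ℝ :=
  (-1) ^ ((m + Q) / (2 * Q : ℤ) + (m + P) / (2 * P : ℤ))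

lemma periodic_of_half_period {P Q : ℕ} {G : ℤ → ℝ}
    (hG : ∀ m, G (m + (2 * P * Q : ℕ)) = (-1) ^ (P + Q) * G m) :
    Function.Periodic G (4 * P * Q : ℕ) := by
  intro m
  have : m + (4 * P * Q : ℕ) = m + (2 * P * Q : ℕ) + (2 * P * Q : ℕ) := by push_cast; ring
  rw [this, hG, hG, ← mul_assoc, ← mul_pow]
  norm_num

lemma sum_eq_zero_of_half_period {P Q : ℕ} {G : ℤ → ℝ}
    (hG : ∀ m, G (m + (2 * P * Q : ℕ)) = (-1) ^ (P + Q) * G m) (hodd : ¬ (Odd P ∧ Odd Q))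
    (h : P.Coprime Q) : ∑ k ∈ Finset.range (4 * P * Q), G k = 0 := by
  have hs := (periodic_of_half_period hG).sum_range_add (2 * P * Q)
  have hPQ : Odd (P + Q) := by
    have : ¬ (Even P ∧ Even Q) := fun ⟨h1, h2⟩ => by
      have := Nat.dvd_gcd h1.two_dvd h2.two_dvd
      rw [h] at this
      norm_num at this
    rw [Nat.odd_add]
    rw [← Nat.not_odd_iff_even, ← Nat.not_odd_iff_even] at this
    rw [← Nat.not_odd_iff_even]
    tauto
  simp only [hG, hPQ.neg_one_pow, ← Finset.mul_sum] at hs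
  linarith

section Pattern

variable {P Q : ℕ} (hP : 0 < P) (hQ : 0 < Q)

include hP hQ

lemma half_period_shift (m : ℤ) :
    (m + (2 * P * Q : ℕ)) / (2 * Q : ℤ) + (m + (2 * P * Q : ℕ)) / (2 * P : ℤ) =
      m / (2 * Q : ℤ) + m / (2 * P : ℤ) + (P + Q : ℕ) := by
  have h1 : m + (2 * P * Q : ℕ) = m + P * (2 * Q : ℤ) := by push_cast; ring
  have h2 : m + (2 * P * Q : ℕ) = m + Q * (2 * P : ℤ) := by push_cast; ring
  rw [h1, Int.add_mul_ediv_right _ _ (by positivity), ← h1, h2,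
    Int.add_mul_ediv_right _ _ (by positivity)]
  push_cast
  ring

lemma half_period_shift' (m : ℤ) :
    (m + (2 * P * Q : ℕ) + Q) / (2 * Q : ℤ) + (m + (2 * P * Q : ℕ) + P) / (2 * P : ℤ) =
      (m + Q) / (2 * Q : ℤ) + (m + P) / (2 * P : ℤ) + (P + Q : ℕ) := by
  have h1 : m + (2 * P * Q : ℕ) + Q = m + Q + P * (2 * Q : ℤ) := by push_cast; ring
  have h2 : m + (2 * P * Q : ℕ) + P = m + P + Q * (2 * P : ℤ) := by push_cast; ring
  rw [h1, Int.add_mul_ediv_right _ _ (by positivity), h2,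
    Int.add_mul_ediv_right _ _ (by positivity)]
  push_cast
  ring

lemma sinPattern_half_period (m : ℤ) :
    sinPattern P Q (m + (2 * P * Q : ℕ)) = (-1) ^ (P + Q) * sinPattern P Q m := by
  rw [sinPattern, half_period_shift hP hQ, zpow_add₀ (by norm_num), zpow_natCast, mul_comm,
    sinPattern]

lemma cosPattern_half_period (m : ℤ) :
    cosPattern P Q (m + (2 * P * Q : ℕ)) = (-1) ^ (P + Q) * cosPattern P Q m := by
  rw [cosPattern, half_period_shift' hP hQ, zpow_add₀ (by norm_num), zpow_natCast, mul_comm,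
    cosPattern]

lemma sum_sinPattern (h : P.Coprime Q) (hPo : Odd P) (hQo : Odd Q) :
    ∑ k ∈ Finset.range (4 * P * Q), sinPattern P Q k = 4 := by
  have hpair : ∀ (F : ℕ → ℝ) (M : ℕ), ∑ k ∈ Finset.range (2 * M), F (k / 2) =
      2 * ∑ j ∈ Finset.range M, F j := by
    intro F M
    induction M with
    | zero => simp
    | succ M ih =>
      rw [show 2 * (M + 1) = 2 * M + 1 + 1 by ring, Finset.sum_range_succ, Finset.sum_range_succ,
        ih, Finset.sum_range_succ, show (2 * M + 1) / 2 = M by omega,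
        show 2 * M / 2 = M by omega]
      ring
  have hcell : ∀ k : ℕ, sinPattern P Q k =
      (fun j : ℕ => (-1 : ℝ) ^ (j % P) * (-1 : ℝ) ^ (j % Q)) (k / 2) := by
    intro k
    have hQ' : Odd (Q : ℤ) := by exact_mod_cast hQo
    have hP' : Odd (P : ℤ) := by exact_mod_cast hPo
    have e1 := Int.ediv_odd_emod_two (j := ((k / 2 : ℕ) : ℤ)) hQ'
    have e2 := Int.ediv_odd_emod_two (j := ((k / 2 : ℕ) : ℤ)) hP'
    simp only [sinPattern]
    rw [← Int.ediv_ediv_of_nonneg (by norm_num), ← Int.ediv_ediv_of_nonneg (by norm_num),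
      ← pow_add, ← zpow_natCast]
    refine neg_one_zpow_eq_of_even_sub ?_
    obtain ⟨c, hc⟩ := e1
    obtain ⟨d, hd⟩ := e2
    refine ⟨c + d + (k : ℤ) / 2, ?_⟩
    push_cast at hc hd ⊢
    linarith
  simp only [hcell]
  rw [show 4 * P * Q = 2 * (2 * (P * Q)) by ring,
    hpair (fun j : ℕ => (-1 : ℝ) ^ (j % P) * (-1 : ℝ) ^ (j % Q))]
  have hper : ∀ j : ℕ, (-1 : ℝ) ^ ((P * Q + j) % P) * (-1 : ℝ) ^ ((P * Q + j) % Q) =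
      (-1 : ℝ) ^ (j % P) * (-1 : ℝ) ^ (j % Q) := by
    intro j
    rw [Nat.mul_add_mod, mul_comm P Q, Nat.mul_add_mod]
  rw [two_mul (P * Q), Finset.sum_range_add]
  simp only [hper]
  rw [sum_range_mul_of_coprime hP hQ h (fun a => (-1) ^ a) (fun a => (-1) ^ a),
    sum_range_neg_one_pow hPo, sum_range_neg_one_pow hQo]
  norm_num

lemma cosPattern_eq_sinPattern (hPo : Odd P) (hQo : Odd Q) (m : ℤ) :
    cosPattern P Q m = (-1) ^ (P / 2 + Q / 2) * sinPattern P Q (m + (P * Q : ℕ)) := by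
  obtain ⟨r, hr⟩ := hPo
  obtain ⟨s, hs⟩ := hQo
  have h1 : m + (P * Q : ℕ) = m + Q + r * (2 * Q : ℤ) := by rw [hr]; push_cast; ring
  have h2 : m + (P * Q : ℕ) = m + P + s * (2 * P : ℤ) := by rw [hs]; push_cast; ring
  rw [sinPattern, h1, Int.add_mul_ediv_right _ _ (by positivity), ← h1, h2,
    Int.add_mul_ediv_right _ _ (by positivity), show P / 2 = r by omega, show Q / 2 = s by omega,
    ← zpow_natCast, ← zpow_add₀ (by norm_num), cosPattern]
  refine neg_one_zpow_eq_of_even_sub ⟨-(r : ℤ) - s, ?_⟩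
  push_cast
  ring

lemma sum_cosPattern (h : P.Coprime Q) (hPo : Odd P) (hQo : Odd Q) :
    ∑ k ∈ Finset.range (4 * P * Q), cosPattern P Q k = (-1) ^ (P / 2 + Q / 2) * 4 := by
  simp only [cosPattern_eq_sinPattern hP hQ hPo hQo]
  rw [← Finset.mul_sum, (periodic_of_half_period
    (sinPattern_half_period hP hQ)).sum_range_add, sum_sinPattern hP hQ h hPo hQo]

lemma hasMean_sinPattern (h : P.Coprime Q) {a : ℕ → ℝ} (ha : EquidistributedMod1 a) :
    HasMean (fun n => sinPattern P Q ⌊((4 * P * Q : ℕ) : ℝ) * a n⌋)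
      (if Odd P ∧ Odd Q then 1 / (P * Q) else 0) := by
  have := ha.hasMean_step (by positivity : 0 < 4 * P * Q)
    (periodic_of_half_period (sinPattern_half_period hP hQ))
  convert this using 1
  split_ifs with ho
  · rw [sum_sinPattern hP hQ h ho.1 ho.2]
    push_cast
    field_simp
  · rw [sum_eq_zero_of_half_period (sinPattern_half_period hP hQ) ho h, zero_div]

lemma hasMean_cosPattern (h : P.Coprime Q) {a : ℕ → ℝ} (ha : EquidistributedMod1 a) :
    HasMean (fun n => cosPattern P Q ⌊((4 * P * Q : ℕ) : ℝ) * a n⌋)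
      (if Odd P ∧ Odd Q then (-1) ^ (P / 2 + Q / 2) / (P * Q) else 0) := by
  have := ha.hasMean_step (by positivity : 0 < 4 * P * Q)
    (periodic_of_half_period (cosPattern_half_period hP hQ))
  convert this using 1
  split_ifs with ho
  · rw [sum_cosPattern hP hQ h ho.1 ho.2]
    push_cast
    field_simp
  · rw [sum_eq_zero_of_half_period (cosPattern_half_period hP hQ) ho h, zero_div]

end Pattern

lemma sgn_neg_one_zpow_mul {r : ℝ} (hr : 0 < r) (m : ℤ) : sgn ((-1) ^ m * r) = (-1) ^ m := by
  rcases Int.even_or_odd m with h | h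
  · simp [sgn, h.neg_one_zpow, hr]
  · simp [sgn, h.neg_one_zpow, hr, hr.le.not_gt]

lemma sin_pi_mul_eq_fract (z : ℝ) : sin (π * z) = (-1) ^ ⌊z⌋ * sin (π * Int.fract z) := by
  rw [← sin_add_int_mul_pi]
  congr 1
  conv_lhs => rw [← Int.fract_add_floor z]
  ring

lemma sin_pi_mul_fract_nonneg (z : ℝ) : 0 ≤ sin (π * Int.fract z) :=
  sin_nonneg_of_nonneg_of_le_pi (mul_nonneg pi_pos.le (Int.fract_nonneg z))
    (mul_le_of_le_one_right pi_pos.le (Int.fract_lt_one z).le)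

lemma sgn_sin_pi_mul {z : ℝ} (h : sin (π * z) ≠ 0) : sgn (sin (π * z)) = (-1) ^ ⌊z⌋ := by
  rw [sin_pi_mul_eq_fract] at h ⊢
  exact sgn_neg_one_zpow_mul
    (lt_of_le_of_ne (sin_pi_mul_fract_nonneg z) (right_ne_zero_of_mul h).symm) _

lemma sgn_cos_pi_mul {z : ℝ} (h : cos (π * z) ≠ 0) :
    sgn (cos (π * z)) = (-1) ^ ⌊z + 1 / 2⌋ := by
  have : cos (π * z) = sin (π * (z + 1 / 2)) := by
    rw [← sin_add_pi_div_two]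
    congr 1
    ring
  rw [this] at h ⊢
  exact sgn_sin_pi_mul h

lemma sgn_cos_int_mul (p : ℤ) {u : ℝ} (h : cos (2 * π * (p * u)) ≠ 0) :
    sgn (cos (2 * π * (p * u))) = (-1) ^ ⌊2 * (p.natAbs : ℝ) * u + 1 / 2⌋ := by
  have e : cos (2 * π * (p * u)) = cos (π * (2 * (p.natAbs : ℝ) * u)) := by
    rw [Nat.cast_natAbs, Int.cast_abs]
    rcases abs_choice (p : ℝ) with hp | hp
    · rw [hp]
      congr 1
      ring
    · rw [hp, ← cos_neg]
      congr 1
      ring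
  rw [e] at h ⊢
  exact sgn_cos_pi_mul h

lemma sgn_neg (t : ℝ) : sgn (-t) = -sgn t := by
  rcases lt_trichotomy t 0 with h | rfl | h
  · simp [sgn, h, h.le.not_gt]
  · simp [sgn]
  · simp [sgn, h, h.le.not_gt]

lemma sgn_sin_int_mul {p : ℤ} (hp0 : p ≠ 0) {u : ℝ} (h : sin (2 * π * (p * u)) ≠ 0) :
    sgn (sin (2 * π * (p * u))) = (p.sign : ℝ) * (-1) ^ ⌊2 * (p.natAbs : ℝ) * u⌋ := by
  rcases lt_or_gt_of_ne hp0 with hp | hp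
  · have e : sin (2 * π * (p * u)) = -sin (π * (2 * (p.natAbs : ℝ) * u)) := by
      rw [← sin_neg, Nat.cast_natAbs, abs_of_neg hp]
      push_cast
      congr 1
      ring
    rw [e] at h ⊢
    rw [sgn_neg, sgn_sin_pi_mul (neg_ne_zero.1 h), Int.sign_eq_neg_one_of_neg hp]
    simp
  · have e : sin (2 * π * (p * u)) = sin (π * (2 * (p.natAbs : ℝ) * u)) := by
      rw [Nat.cast_natAbs, abs_of_pos hp]
      congr 1
      ring
    rw [e] at h ⊢
    rw [sgn_sin_pi_mul h, Int.sign_eq_one_of_pos hp]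
    simp

lemma sinPattern_floor {P Q : ℕ} (hP : 0 < P) (hQ : 0 < Q) (u : ℝ) :
    sinPattern P Q ⌊((4 * P * Q : ℕ) : ℝ) * u⌋ =
      (-1) ^ ⌊2 * (P : ℝ) * u⌋ * (-1) ^ ⌊2 * (Q : ℝ) * u⌋ := by
  have h1 : ((4 * P * Q : ℕ) : ℝ) * u = 2 * (P : ℝ) * u * (2 * Q : ℕ) := by push_cast; ring
  have h2 : ((4 * P * Q : ℕ) : ℝ) * u = 2 * (Q : ℝ) * u * (2 * P : ℕ) := by push_cast; ring
  have e1 := Int.mul_natCast_floor_div_cancel (n := 2 * Q) (by positivity) (2 * (P : ℝ) * u)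
  have e2 := Int.mul_natCast_floor_div_cancel (n := 2 * P) (by positivity) (2 * (Q : ℝ) * u)
  rw [← h1] at e1
  rw [← h2] at e2
  rw [← zpow_add₀ (by norm_num), sinPattern, ← e1, ← e2]
  norm_cast

lemma cosPattern_floor {P Q : ℕ} (hP : 0 < P) (hQ : 0 < Q) (u : ℝ) :
    cosPattern P Q ⌊((4 * P * Q : ℕ) : ℝ) * u⌋ =
      (-1) ^ ⌊2 * (P : ℝ) * u + 1 / 2⌋ * (-1) ^ ⌊2 * (Q : ℝ) * u + 1 / 2⌋ := by
  have h1 : (2 * (P : ℝ) * u + 1 / 2) * (2 * Q : ℕ) = ((4 * P * Q : ℕ) : ℝ) * u + Q := by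
    push_cast; ring
  have h2 : (2 * (Q : ℝ) * u + 1 / 2) * (2 * P : ℕ) = ((4 * P * Q : ℕ) : ℝ) * u + P := by
    push_cast; ring
  have e1 := Int.mul_natCast_floor_div_cancel (n := 2 * Q) (by positivity) (2 * (P : ℝ) * u + 1 / 2)
  have e2 := Int.mul_natCast_floor_div_cancel (n := 2 * P) (by positivity) (2 * (Q : ℝ) * u + 1 / 2)
  rw [h1, Int.floor_add_natCast] at e1
  rw [h2, Int.floor_add_natCast] at e2
  rw [← zpow_add₀ (by norm_num), cosPattern, ← e1, ← e2]
  norm_cast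

lemma ite_eq_of_sq_eq_one {s t : ℝ} (hs : s ^ 2 = 1) (ht : t ^ 2 = 1) :
    (if s = t then (1 : ℝ) else 0) = (1 + s * t) / 2 := by
  rcases sq_eq_sq_iff_eq_or_eq_neg.1 (hs.trans (one_pow 2).symm) with rfl | rfl <;>
    rcases sq_eq_sq_iff_eq_or_eq_neg.1 (ht.trans (one_pow 2).symm) with rfl | rfl <;> norm_num

lemma neg_one_zpow_sq (m : ℤ) : ((-1 : ℝ) ^ m) ^ 2 = 1 := by
  rcases Int.even_or_odd m with h | h <;> simp [h.neg_one_zpow]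

lemma lt_abs_sin_cos_of_fract {δ v : ℝ} (h₁ : δ < Int.fract (4 * v))
    (h₂ : Int.fract (4 * v) < 1 - δ) :
    δ < |sin (2 * π * v)| ∧ δ < |cos (2 * π * v)| := by
  have hs : 2 * δ < sin (π * Int.fract (4 * v)) := by
    have hf0 := Int.fract_nonneg (4 * v)
    have hf1 := (Int.fract_lt_one (4 * v)).le
    set f := Int.fract (4 * v)
    have hcancel : ∀ g : ℝ, 2 / π * (π * g) = 2 * g := fun g => by field_simp
    rcases le_total f (1 / 2) with h | h
    · have := mul_le_sin (x := π * f) (by positivity) (by nlinarith [pi_pos])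
      rw [hcancel] at this
      linarith
    · have := mul_le_sin (x := π * (1 - f)) (mul_nonneg pi_pos.le (by linarith))
        (by nlinarith [pi_pos])
      rw [hcancel, show π * (1 - f) = π - π * f by ring, sin_pi_sub] at this
      linarith
  have hd : |sin (π * (4 * v))| = 2 * |sin (2 * π * v)| * |cos (2 * π * v)| := by
    rw [show π * (4 * v) = 2 * (2 * π * v) by ring, sin_two_mul, abs_mul, abs_mul]
    norm_num
  rw [sin_pi_mul_eq_fract, abs_mul, abs_zpow, abs_neg, abs_one, one_zpow, one_mul] at hd
  have hle := hs.trans_le (le_abs_self _)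
  rw [hd] at hle
  have h1 := abs_sin_le_one (2 * π * v)
  have h2 := abs_cos_le_one (2 * π * v)
  constructor <;> nlinarith [abs_nonneg (sin (2 * π * v)), abs_nonneg (cos (2 * π * v))]

/-- Two bounded sequences which agree away from the zeros of the trigonometric factors at `x`
and `y` have the same mean. -/
lemma HasMean.of_agree {r : ℕ → ℝ} (hr : ∀ x : ℝ, x ≠ 0 → EquidistributedMod1 fun n => r n * x)
    {x y : ℝ} (hx : x ≠ 0) (hy : y ≠ 0) {f g : ℕ → ℝ} {L : ℝ} (hg : HasMean g L)
    (hfg : ∀ n, |f n - g n| ≤ 1)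
    (h : ∀ δ > 0, ∀ᶠ n in atTop,
      δ < |sin (2 * π * (r n * x))| ∧ δ < |cos (2 * π * (r n * x))| →
      δ < |sin (2 * π * (r n * y))| ∧ δ < |cos (2 * π * (r n * y))| → f n = g n) :
    HasMean f L := by
  refine hg.of_approx fun ε hε => ?_
  set δ := min (1 / 2) (ε / 8)
  have hδ : 0 < δ := by positivity
  have hδ1 : δ ≤ 1 / 2 := min_le_left _ _
  have hδ2 : δ ≤ ε / 8 := min_le_right _ _
  have hb : ∀ z : ℝ, z ≠ 0 → HasMean (fun n =>
      (if Int.fract (r n * (4 * z)) ∈ Set.Icc 0 δ then (1 : ℝ) else 0) +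
        (if Int.fract (r n * (4 * z)) ∈ Set.Icc (1 - δ) 1 then (1 : ℝ) else 0))
      (2 * δ) := fun z hz => by
    have he := hr (4 * z) (by positivity)
    convert (he.hasMean_Icc le_rfl hδ.le (by linarith)).add
      (he.hasMean_Icc (c := 1 - δ) (d := 1) (by linarith) (by linarith) le_rfl) using 1
    ring
  refine ⟨_, _, ?_, (hb x hx).add (hb y hy), ?_⟩
  · linarith
  have hgood : ∀ (z : ℝ) (n : ℕ),
      (1 : ℝ) ≤ (if Int.fract (r n * (4 * z)) ∈ Set.Icc 0 δ then (1 : ℝ) else 0) +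
        (if Int.fract (r n * (4 * z)) ∈ Set.Icc (1 - δ) 1 then (1 : ℝ) else 0) ∨
      (δ < |sin (2 * π * (r n * z))| ∧ δ < |cos (2 * π * (r n * z))|) := by
    intro z n
    rw [show r n * (4 * z) = 4 * (r n * z) by ring]
    by_cases h1 : Int.fract (4 * (r n * z)) ∈ Set.Icc 0 δ
    · left
      rw [if_pos h1]
      split_ifs <;> norm_num
    by_cases h2 : Int.fract (4 * (r n * z)) ∈ Set.Icc (1 - δ) 1
    · left
      rw [if_neg h1, if_pos h2, zero_add]
    right
    refine lt_abs_sin_cos_of_fract ?_ ?_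
    · by_contra! h3
      exact h1 ⟨Int.fract_nonneg _, h3⟩
    · by_contra! h3
      exact h2 ⟨h3, (Int.fract_lt_one _).le⟩
  have hnn : ∀ (z : ℝ) (n : ℕ),
      (0 : ℝ) ≤ (if Int.fract (r n * (4 * z)) ∈ Set.Icc 0 δ then (1 : ℝ) else 0) +
        (if Int.fract (r n * (4 * z)) ∈ Set.Icc (1 - δ) 1 then (1 : ℝ) else 0) := by
    intro z n
    split_ifs <;> norm_num
  filter_upwards [h δ hδ] with n hn
  rcases hgood x n with hx' | hx'
  · linarith [hfg n, hnn y n]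
  rcases hgood y n with hy' | hy'
  · linarith [hfg n, hnn x n]
  rw [hn hx' hy', sub_self, abs_zero]
  exact add_nonneg (hnn x n) (hnn y n)

section SignMeans

variable {V : ℝ → ℝ} (hV : LocallyIntegrable V volume) {l : ℕ → ℝ} (hlpos : ∀ n, 0 < l n)
  (hl : Tendsto l atTop atTop)
  (heq : ∀ x : ℝ, x ≠ 0 → EquidistributedMod1 fun n => √(l n) * x) {w w' : ℕ → ℝ → ℝ}
  (hw : ∀ n x, HasDerivAt (w n) (w' n x) x)
  (hODE : ∀ n x, HasDerivAt (w' n) (4 * π ^ 2 * (V x - l n) * w n x) x)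
  {p q : ℤ} (hp : p ≠ 0) (hq : q ≠ 0) (hcop : p.natAbs.Coprime q.natAbs) {t : ℝ} (ht : t ≠ 0)

include hV hlpos hl heq hw hODE hp hq hcop ht

lemma hasMean_sgn_eq_of_even (h0 : ∀ n, w' n 0 = 0) (hs : ∀ n, sgn (w n 0) ≠ 0) :
    HasMean (fun n => if sgn (w n (p * t)) = sgn (w n (q * t)) then 1 else 0)
      (2⁻¹ + 2⁻¹ * if Odd p.natAbs ∧ Odd q.natAbs then
        (-1 : ℝ) ^ (p.natAbs / 2 + q.natAbs / 2) / (p.natAbs * q.natAbs) else 0) := by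
  have hP : 0 < p.natAbs := Int.natAbs_pos.2 hp
  have hQ : 0 < q.natAbs := Int.natAbs_pos.2 hq
  have hmodel := (HasMean.const 2⁻¹).add
    ((hasMean_cosPattern hP hQ hcop (heq t ht)).const_mul 2⁻¹)
  have hx : (p : ℝ) * t ≠ 0 := mul_ne_zero (by exact_mod_cast hp) ht
  have hy : (q : ℝ) * t ≠ 0 := mul_ne_zero (by exact_mod_cast hq) ht
  have hval : ∀ n, (2⁻¹ : ℝ) + 2⁻¹ * cosPattern p.natAbs q.natAbs
      ⌊((4 * p.natAbs * q.natAbs : ℕ) : ℝ) * (√(l n) * t)⌋ =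
      if (-1 : ℝ) ^ ⌊2 * (p.natAbs : ℝ) * (√(l n) * t) + 1 / 2⌋ =
        (-1 : ℝ) ^ ⌊2 * (q.natAbs : ℝ) * (√(l n) * t) + 1 / 2⌋ then 1 else 0 := fun n => by
    rw [cosPattern_floor hP hQ, ite_eq_of_sq_eq_one (neg_one_zpow_sq _) (neg_one_zpow_sq _)]
    ring
  simp only [hval] at hmodel
  refine hmodel.of_agree heq hx hy (fun n => ?_) fun δ hδ => ?_
  · split_ifs <;> norm_num
  filter_upwards [eventually_sgn_eq_cos hV hlpos hl hw hODE h0 (p * t) hδ,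
    eventually_sgn_eq_cos hV hlpos hl hw hODE h0 (q * t) hδ] with n hnx hny hgx hgy
  rw [← mul_assoc] at hgx hgy
  rw [hnx hgx.2, hny hgy.2]
  have hcx := abs_pos.1 (hδ.trans hgx.2)
  have hcy := abs_pos.1 (hδ.trans hgy.2)
  have ex : 2 * π * √(l n) * (p * t) = 2 * π * (p * (√(l n) * t)) := by ring
  have ey : 2 * π * √(l n) * (q * t) = 2 * π * (q * (√(l n) * t)) := by ring
  rw [ex] at hcx ⊢
  rw [ey] at hcy ⊢
  rw [sgn_cos_int_mul p hcx, sgn_cos_int_mul q hcy]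
  simp only [mul_right_inj' (hs n)]

lemma hasMean_sgn_eq_of_odd (h0 : ∀ n, w n 0 = 0) (hs : ∀ n, sgn (w' n 0) ≠ 0) :
    HasMean (fun n => if sgn (w n (p * t)) = sgn (w n (q * t)) then 1 else 0)
      (2⁻¹ + 2⁻¹ * (p.sign * q.sign) * if Odd p.natAbs ∧ Odd q.natAbs then
        1 / (p.natAbs * q.natAbs : ℝ) else 0) := by
  have hP : 0 < p.natAbs := Int.natAbs_pos.2 hp
  have hQ : 0 < q.natAbs := Int.natAbs_pos.2 hq
  have hmodel := (HasMean.const 2⁻¹).add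
    ((hasMean_sinPattern hP hQ hcop (heq t ht)).const_mul (2⁻¹ * (p.sign * q.sign : ℝ)))
  have hx : (p : ℝ) * t ≠ 0 := mul_ne_zero (by exact_mod_cast hp) ht
  have hy : (q : ℝ) * t ≠ 0 := mul_ne_zero (by exact_mod_cast hq) ht
  have hsq : ∀ {z : ℤ} (_ : z ≠ 0) (m : ℤ), ((z.sign : ℝ) * (-1) ^ m) ^ 2 = 1 := fun hz m => by
    rw [mul_pow, neg_one_zpow_sq, mul_one]
    rcases lt_or_gt_of_ne hz with h | h
    · rw [Int.sign_eq_neg_one_of_neg h]; norm_num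
    · rw [Int.sign_eq_one_of_pos h]; norm_num
  have hval : ∀ n, (2⁻¹ : ℝ) + 2⁻¹ * (p.sign * q.sign) * sinPattern p.natAbs q.natAbs
      ⌊((4 * p.natAbs * q.natAbs : ℕ) : ℝ) * (√(l n) * t)⌋ =
      if (p.sign : ℝ) * (-1 : ℝ) ^ ⌊2 * (p.natAbs : ℝ) * (√(l n) * t)⌋ =
        (q.sign : ℝ) * (-1 : ℝ) ^ ⌊2 * (q.natAbs : ℝ) * (√(l n) * t)⌋ then 1 else 0 := fun n => by
    rw [sinPattern_floor hP hQ, ite_eq_of_sq_eq_one (hsq hp _) (hsq hq _)]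
    ring
  simp only [hval] at hmodel
  refine hmodel.of_agree heq hx hy (fun n => ?_) fun δ hδ => ?_
  · split_ifs <;> norm_num
  filter_upwards [eventually_sgn_eq_sin hV hlpos hl hw hODE h0 (p * t) hδ,
    eventually_sgn_eq_sin hV hlpos hl hw hODE h0 (q * t) hδ] with n hnx hny hgx hgy
  rw [← mul_assoc] at hgx hgy
  rw [hnx hgx.1, hny hgy.1]
  have hcx := abs_pos.1 (hδ.trans hgx.1)
  have hcy := abs_pos.1 (hδ.trans hgy.1)
  have ex : 2 * π * √(l n) * (p * t) = 2 * π * (p * (√(l n) * t)) := by ring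
  have ey : 2 * π * √(l n) * (q * t) = 2 * π * (q * (√(l n) * t)) := by ring
  rw [ex] at hcx ⊢
  rw [ey] at hcy ⊢
  rw [sgn_sin_int_mul hp hcx, sgn_sin_int_mul hq hcy]
  simp only [mul_right_inj' (hs n)]

end SignMeans

lemma sign_eq_of_odd {p : ℤ} (ho : Odd p.natAbs) :
    (p.sign : ℝ) = (if p % 4 = 1 then 1 else -1) * (-1) ^ (p.natAbs / 2) := by
  obtain ⟨r, hr⟩ := ho
  rw [show p.natAbs / 2 = r by omega]
  rcases lt_or_gt_of_ne (show p ≠ 0 by omega) with h | h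
  · rw [Int.sign_eq_neg_one_of_neg h]
    rcases Nat.even_or_odd r with hr' | hr'
    · rw [hr'.neg_one_pow, if_neg (by obtain ⟨s, hs⟩ := hr'; omega)]
      norm_num
    · rw [hr'.neg_one_pow, if_pos (by obtain ⟨s, hs⟩ := hr'; omega)]
      norm_num
  · rw [Int.sign_eq_one_of_pos h]
    rcases Nat.even_or_odd r with hr' | hr'
    · rw [hr'.neg_one_pow, if_pos (by obtain ⟨s, hs⟩ := hr'; omega)]
      norm_num
    · rw [hr'.neg_one_pow, if_neg (by obtain ⟨s, hs⟩ := hr'; omega)]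
      norm_num

lemma average_of_even_odd_means {p q : ℤ} (hp : p ≠ 0) (hq : q ≠ 0) :
    ((2⁻¹ + 2⁻¹ * if Odd p.natAbs ∧ Odd q.natAbs then
        (-1 : ℝ) ^ (p.natAbs / 2 + q.natAbs / 2) / (p.natAbs * q.natAbs) else 0) +
      (2⁻¹ + 2⁻¹ * (p.sign * q.sign) * if Odd p.natAbs ∧ Odd q.natAbs then
        1 / (p.natAbs * q.natAbs : ℝ) else 0)) / 2 =
    if (p % 4 = 1 ∧ q % 4 = 1) ∨ (p % 4 = 3 ∧ q % 4 = 3)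
      then 1/2 + 1/(2 * (p : ℝ) * (q : ℝ)) else 1/2 := by
  by_cases ho : Odd p.natAbs ∧ Odd q.natAbs
  · have hp' : (p : ℝ) ≠ 0 := by exact_mod_cast hp
    have hq' : (q : ℝ) ≠ 0 := by exact_mod_cast hq
    have hP : (p.natAbs : ℝ) = p.sign * p := by
      rw [mul_comm, ← Int.cast_natCast, ← Int.mul_sign_self p, Int.cast_mul]
    have hQ : (q.natAbs : ℝ) = q.sign * q := by
      rw [mul_comm, ← Int.cast_natCast, ← Int.mul_sign_self q, Int.cast_mul]
    rw [if_pos ho, if_pos ho, hP, hQ, sign_eq_of_odd ho.1, sign_eq_of_odd ho.2, pow_add]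
    have hpm : p % 4 = 1 ∨ p % 4 = 3 := by
      obtain ⟨r, hr⟩ := ho.1
      omega
    have hqm : q % 4 = 1 ∨ q % 4 = 3 := by
      obtain ⟨r, hr⟩ := ho.2
      omega
    rcases neg_one_pow_eq_or ℝ (p.natAbs / 2) with h1 | h1 <;>
      rcases neg_one_pow_eq_or ℝ (q.natAbs / 2) with h2 | h2 <;>
      rcases hpm with h3 | h3 <;> rcases hqm with h4 | h4 <;>
      simp only [h1, h2, h3, h4] <;> norm_num <;> field_simp <;> ring
  · rw [if_neg ho, if_neg ho, if_neg]
    · norm_num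
    · intro h
      exact ho ⟨by rw [Nat.odd_iff]; omega, by rw [Nat.odd_iff]; omega⟩

lemma deriv_zero_of_even {f f' : ℝ → ℝ} (hf : ∀ x, HasDerivAt f (f' x) x)
    (he : ∀ x, f (-x) = f x) : f' 0 = 0 := by
  have h1 : HasDerivAt (fun x => f (-x)) (-f' 0) 0 := by
    simpa [Function.comp_def] using (hf (-0)).comp (0 : ℝ) (hasDerivAt_neg (0 : ℝ))
  have h2 : HasDerivAt f (-f' 0) 0 := by simpa only [he] using h1
  linarith [h2.unique (hf 0)]

theorem schrodinger_sign_correlation_rational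
    (V : ℝ → ℝ) (hVloc : LocallyIntegrable V volume)
    (hVeven : ∀ x, V (-x) = V x)
    (hVbelow : ∃ c : ℝ, ∀ᵐ x : ℝ, c ≤ V x)
    (hVinfty : Tendsto V (cocompact ℝ) atTop)
    (lam : ℕ → ℝ) (hlampos : ∀ n, 0 < lam n) (hlam : Tendsto lam atTop atTop)
    (w w' : ℕ → ℝ → ℝ)
    (hw' : ∀ n x, HasDerivAt (w n) (w' n x) x)
    (hODE : ∀ n x, HasDerivAt (w' n) (4 * π ^ 2 * (V x - lam n) * w n x) x)
    (H1even : ∀ n, Even n → ∀ x, w n (-x) = w n x)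
    (H1odd : ∀ n, Odd n → ∀ x, w n (-x) = - w n x)
    (H2 : ∀ x : ℝ, x ≠ 0 →
      EquidistributedMod1 (fun n => Real.sqrt (lam (2 * n)) * x) ∧
      EquidistributedMod1 (fun n => Real.sqrt (lam (2 * n + 1)) * x))
    (H3even : ∀ n : ℕ, sgn (w (2 * n) 0) = (-1 : ℝ) ^ n)
    (H3odd : ∀ n : ℕ, sgn (w' (2 * n + 1) 0) = (-1 : ℝ) ^ n)
    (x y : ℝ) (hxy : x ≠ y)
    (p q : ℤ) (hp : p ≠ 0) (hq : q ≠ 0) (hcop : IsCoprime p q)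
    (hpq : (q : ℝ) * x = (p : ℝ) * y) :
    Tendsto (fun N : ℕ =>
      (((Finset.range N).filter (fun n => sgn (w n x) = sgn (w n y))).card : ℝ) / N)
      atTop (nhds (if (p % 4 = 1 ∧ q % 4 = 1) ∨ (p % 4 = 3 ∧ q % 4 = 3)
        then 1/2 + 1/(2 * (p : ℝ) * (q : ℝ)) else 1/2)) := by
  have hp' : (p : ℝ) ≠ 0 := by exact_mod_cast hp
  have hq' : (q : ℝ) ≠ 0 := by exact_mod_cast hq
  obtain ⟨t, rfl⟩ : ∃ t, x = p * t := ⟨x / p, by field_simp⟩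
  obtain rfl : y = q * t := mul_left_cancel₀ hp' (by rw [← hpq]; ring)
  have ht : t ≠ 0 := by
    rintro rfl
    simp at hxy
  have hcop' := Int.isCoprime_iff_gcd_eq_one.1 hcop
  have hdouble : Tendsto (fun n : ℕ => 2 * n) atTop atTop :=
    tendsto_id.const_mul_atTop' two_pos
  have heven := hasMean_sgn_eq_of_even hVloc (fun n => hlampos (2 * n)) (hlam.comp hdouble)
    (fun z hz => (H2 z hz).1) (fun n => hw' (2 * n)) (fun n => hODE (2 * n)) hp hq hcop' ht
    (fun n => deriv_zero_of_even (hw' (2 * n)) (H1even _ (even_two_mul n)))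
    (fun n => by rw [H3even]; exact pow_ne_zero _ (by norm_num))
  have hodd := hasMean_sgn_eq_of_odd hVloc (fun n => hlampos (2 * n + 1))
    (hlam.comp ((tendsto_add_atTop_nat 1).comp hdouble))
    (fun z hz => (H2 z hz).2) (fun n => hw' (2 * n + 1)) (fun n => hODE (2 * n + 1)) hp hq hcop' ht
    (fun n => by
      have := H1odd (2 * n + 1) (odd_two_mul_add_one n) 0
      rw [neg_zero] at this
      linarith)
    (fun n => by rw [H3odd]; exact pow_ne_zero _ (by norm_num))
  have hmean := HasMean.interleave
    (f := fun n => if sgn (w n (p * t)) = sgn (w n (q * t)) then 1 else 0) heven hodd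
  rw [average_of_even_odd_means hp hq] at hmean
  refine hmean.congr fun N => ?_
  rw [Finset.sum_boole]
end

section
/- Let d ≥ 1, let a = (a_1, …, a_d) ∈ ℝ^d, and suppose λ > 0 is such that λ·a_i ∈ ℤ for every i. Let f : ℝ → ℝ be a continuous 1-periodic function whose zero set in [0,1) is finite, let (μ_n) be a sequence of reals such that (μ_n/λ) is equidistributed modulo 1, and let s ∈ {−1, 1}^d. Define Ψ : ℝ^d → {0,1} by Ψ(u) = 1 if (sgn(f(u_1)), …, sgn(f(u_d))) equals s or −s, and Ψ(u) = 0 otherwise. Then (1/N) · #{0 ≤ n < N : (sgn(f(μ_n a_1)), …, sgn(f(μ_n a_d))) equals s or −s} → ∫₀¹ Ψ(λ t a_1, …, λ t a_d) dt as N → ∞. -/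
open Filter Real MeasureTheory
open scoped Classical

/-- The number of indices `n < N` for which `u n` lies in `S` modulo 1. -/
noncomputable def visitCount (u : ℕ → ℝ) (S : Set ℝ) (N : ℕ) : ℕ :=
  ((Finset.range N).filter (fun n => Int.fract (u n) ∈ S)).card

lemma visitCount_empty (u : ℕ → ℝ) (N : ℕ) : visitCount u ∅ N = 0 := by
  simp [visitCount]

lemma visitCount_union (u : ℕ → ℝ) {S T : Set ℝ} (h : Disjoint S T) (N : ℕ) :
    visitCount u (S ∪ T) N = visitCount u S N + visitCount u T N := by
  unfold visitCount
  rw [← Finset.card_union_of_disjoint]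
  · congr 1
    ext n
    simp only [Finset.mem_filter, Finset.mem_union, Set.mem_union]
    tauto
  · rw [Finset.disjoint_filter]
    exact fun n _ hS hT => Set.disjoint_left.1 h hS hT

/-- The sequence `u` visits the bounded measurable set `S` modulo 1 with asymptotic frequency equal
to the Lebesgue measure of `S`. -/
structure VisitsWithFrequency (u : ℕ → ℝ) (S : Set ℝ) : Prop where
  measurableSet : MeasurableSet S
  volume_ne_top : volume S ≠ ⊤
  tendsto : Tendsto (fun N : ℕ => (visitCount u S N : ℝ) / N) atTop (nhds (volume.real S))

namespace VisitsWithFrequency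

variable {u : ℕ → ℝ} {S T : Set ℝ}

lemma empty : VisitsWithFrequency u ∅ := ⟨MeasurableSet.empty, by simp, by simp [visitCount_empty]⟩

lemma union (hS : VisitsWithFrequency u S) (hT : VisitsWithFrequency u T) (h : Disjoint S T) :
    VisitsWithFrequency u (S ∪ T) := by
  refine ⟨hS.1.union hT.1, (measure_union_lt_top hS.2.lt_top hT.2.lt_top).ne, ?_⟩
  rw [measureReal_union h hT.1 hS.2 hT.2]
  refine (hS.3.add hT.3).congr fun N => ?_
  rw [visitCount_union u h]
  push_cast
  ring

lemma diff (hS : VisitsWithFrequency u S) (hT : VisitsWithFrequency u T) (h : T ⊆ S) :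
    VisitsWithFrequency u (S \ T) := by
  refine ⟨hS.1.diff hT.1, measure_ne_top_of_subset Set.sdiff_subset hS.2, ?_⟩
  rw [measureReal_sdiff h hT.1 hS.2]
  refine (hS.3.sub hT.3).congr fun N => ?_
  have := visitCount_union u (Set.disjoint_sdiff_left (s := T) (t := S)) N
  rw [Set.sdiff_union_of_subset h] at this
  rw [this]
  push_cast
  ring

end VisitsWithFrequency

namespace EquidistributedMod1

variable {u : ℕ → ℝ}

lemma visits_Icc (hu : EquidistributedMod1 u) {c d : ℝ} (hc : 0 ≤ c) (hcd : c ≤ d) (hd : d ≤ 1) :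
    VisitsWithFrequency u (Set.Icc c d) := by
  refine ⟨measurableSet_Icc, by simp, ?_⟩
  rw [Real.volume_real_Icc_of_le hcd]
  unfold visitCount
  convert hu c d hc hcd hd

lemma visits_inter_singleton (hu : EquidistributedMod1 u) (S : Set ℝ) {c : ℝ} (hc : 0 ≤ c)
    (hc' : c ≤ 1) : VisitsWithFrequency u (S ∩ {c}) := by
  by_cases h : c ∈ S
  · rw [Set.inter_eq_right.2 (by simpa using h), ← Set.Icc_self]
    exact hu.visits_Icc hc le_rfl hc'
  · rw [Set.inter_singleton_eq_empty.2 h]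
    exact .empty

lemma visits_Ioo (hu : EquidistributedMod1 u) {c d : ℝ} (hc : 0 ≤ c) (hd : d ≤ 1) :
    VisitsWithFrequency u (Set.Ioo c d) := by
  rcases lt_or_ge c d with hcd | hcd
  · have hsing : ∀ x, 0 ≤ x → x ≤ 1 → VisitsWithFrequency u {x} := fun x h₀ h₁ => by
      simpa using hu.visits_inter_singleton Set.univ h₀ h₁
    rw [← Set.Icc_sdiff_both, Set.insert_eq]
    refine (hu.visits_Icc hc hcd.le hd).diff
      ((hsing c hc (by linarith)).union (hsing d (by linarith) hd) (by simpa using hcd.ne)) ?_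
    rintro x (rfl | rfl)
    · exact Set.left_mem_Icc.2 hcd.le
    · exact Set.right_mem_Icc.2 hcd.le
  · rw [Set.Ioo_eq_empty hcd.not_gt]
    exact .empty

/-- An equidistributed sequence visits with the expected frequency every set whose indicator is
locally constant off a finite set. -/
lemma visits_inter_Ioo (hu : EquidistributedMod1 u) (S : Set ℝ) (B : Finset ℝ) :
    ∀ c d : ℝ, 0 ≤ c → d ≤ 1 →
      (∀ x ∈ Set.Ioo c d, x ∉ B → ∀ᶠ y in nhds x, (y ∈ S ↔ x ∈ S)) →
      VisitsWithFrequency u (S ∩ Set.Ioo c d) := by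
  induction B using Finset.induction_on with
  | empty =>
    intro c d hc hd hloc
    have hcont : ContinuousOn (fun x => decide (x ∈ S)) (Set.Ioo c d) := by
      intro x hx
      refine ContinuousAt.continuousWithinAt ?_
      refine (continuousAt_const (y := decide (x ∈ S))).congr ?_
      filter_upwards [hloc x hx (by simp)] with y hy
      simp [hy]
    by_cases hne : ∃ x ∈ Set.Ioo c d, x ∈ S
    · obtain ⟨x, hx, hxS⟩ := hne
      rw [Set.inter_eq_right.2]
      · exact hu.visits_Ioo hc hd
      · intro y hy
        have := isPreconnected_Ioo.constant hcont hx hy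
        simpa [hxS] using this
    · rw [show S ∩ Set.Ioo c d = ∅ from ?_]
      · exact .empty
      · ext x
        simp only [Set.mem_inter_iff, Set.mem_empty_iff_false, iff_false]
        exact fun h => hne ⟨x, h.2, h.1⟩
  | insert b B _ ih =>
    intro c d hc hd hloc
    by_cases hb : b ∈ Set.Ioo c d
    · have hleft := ih c b hc (hb.2.le.trans hd) fun x hx hxB =>
        hloc x ⟨hx.1, hx.2.trans hb.2⟩ (by simp [hxB, hx.2.ne])
      have hright := ih b d (hc.trans hb.1.le) hd fun x hx hxB =>
        hloc x ⟨hb.1.trans hx.1, hx.2⟩ (by simp [hxB, hx.1.ne'])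
      have hmid := hu.visits_inter_singleton S (hc.trans hb.1.le) (hb.2.le.trans hd)
      have hsplit : Set.Ioo c d = Set.Ioo c b ∪ {b} ∪ Set.Ioo b d := by
        rw [Set.Ioo_union_right hb.1, Set.Ioc_union_Ioo_eq_Ioo hb.1.le hb.2]
      rw [hsplit, Set.inter_union_distrib_left, Set.inter_union_distrib_left]
      refine (hleft.union hmid ?_).union hright ?_
      · rw [Set.disjoint_left]
        rintro x ⟨_, hx⟩ ⟨_, rfl⟩
        exact lt_irrefl _ hx.2
      · rw [Set.disjoint_left]
        rintro x (⟨_, hx⟩ | ⟨_, rfl⟩) ⟨_, hx'⟩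
        · exact lt_asymm hx.2 hx'.1
        · exact lt_irrefl _ hx'.1
    · refine ih c d hc hd fun x hx hxB => hloc x hx ?_
      rw [Finset.mem_insert, not_or]
      exact ⟨fun h => hb (h ▸ hx), hxB⟩

lemma tendsto_intervalIntegral (hu : EquidistributedMod1 u) {P : ℝ → Prop}
    (hP : Function.Periodic P 1) {B : Set ℝ} (hB : B.Finite)
    (hloc : ∀ x ∈ Set.Ioo (0 : ℝ) 1, x ∉ B → ∀ᶠ y in nhds x, (P y ↔ P x)) :
    Tendsto (fun N : ℕ => (((Finset.range N).filter (fun n => P (u n))).card : ℝ) / N)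
      atTop (nhds (∫ t in (0 : ℝ)..1, if P t then (1 : ℝ) else 0)) := by
  have hIoo := hu.visits_inter_Ioo {t | P t} hB.toFinset 0 1 le_rfl le_rfl
    fun x hx hxB => hloc x hx (by simpa using hxB)
  have hall := hIoo.union (hu.visits_inter_singleton {t | P t} le_rfl zero_le_one) (by
    rw [Set.disjoint_left]
    rintro x ⟨_, hx⟩ ⟨_, rfl⟩
    exact lt_irrefl _ hx.1)
  rw [← Set.inter_union_distrib_left, Set.Ioo_union_left zero_lt_one] at hall
  have hint : (∫ t in (0 : ℝ)..1, if P t then (1 : ℝ) else 0) =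
      volume.real ({t | P t} ∩ Set.Ico 0 1) := by
    have hind : (fun t => if P t then (1 : ℝ) else 0) =ᵐ[volume.restrict (Set.Ico 0 1)]
        ({t | P t} ∩ Set.Ico 0 1).indicator 1 := by
      filter_upwards [ae_restrict_mem measurableSet_Ico] with t ht
      simp [Set.indicator_apply, ht.1, ht.2]
    rw [intervalIntegral.integral_of_le zero_le_one, ← integral_Ico_eq_integral_Ioc,
      integral_congr_ae hind, integral_indicator_one hall.1,
      measureReal_restrict_apply hall.1, Set.inter_assoc, Set.inter_self]
  rw [hint]
  refine hall.3.congr fun N => ?_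
  unfold visitCount
  congr 3
  ext n
  have hfract : P (Int.fract (u n)) = P (u n) := by
    have := hP.sub_int_mul_eq (x := u n) ⌊u n⌋
    rwa [mul_one] at this
  simp [hfract, Int.fract_nonneg, Int.fract_lt_one]

end EquidistributedMod1

lemma Function.Periodic.finite_zeros_comp_mul {f : ℝ → ℝ} (hper : Function.Periodic f 1)
    (hzero : {t | t ∈ Set.Ico (0 : ℝ) 1 ∧ f t = 0}.Finite) {k : ℝ} (hk : k ≠ 0) :
    {t | t ∈ Set.Icc (0 : ℝ) 1 ∧ f (k * t) = 0}.Finite := by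
  refine (((Set.finite_Icc ⌊-|k|⌋ ⌊|k|⌋).prod hzero).image
    fun p : ℤ × ℝ => ((p.1 : ℝ) + p.2) / k).subset ?_
  rintro t ⟨ht, hft⟩
  have habs : |k * t| ≤ |k| := by
    rw [abs_mul, abs_of_nonneg ht.1]
    exact mul_le_of_le_one_right (abs_nonneg k) ht.2
  refine ⟨(⌊k * t⌋, Int.fract (k * t)), ⟨⟨?_, ?_⟩, ⟨Int.fract_nonneg _, Int.fract_lt_one _⟩, ?_⟩, ?_⟩
  · exact Int.floor_le_floor (abs_le.1 habs).1
  · exact Int.floor_le_floor (abs_le.1 habs).2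
  · have := hper.sub_int_mul_eq (x := k * t) ⌊k * t⌋
    rw [mul_one] at this
    exact this.trans hft
  · simp only [Int.floor_add_fract]
    field_simp

lemma eventually_sgn_eq {g : ℝ → ℝ} {x : ℝ} (hg : ContinuousAt g x) (hx : g x ≠ 0) :
    ∀ᶠ y in nhds x, sgn (g y) = sgn (g x) := by
  rcases hx.lt_or_gt with h | h
  · filter_upwards [hg.eventually (gt_mem_nhds h)] with y hy
    simp [sgn, h, hy, h.not_gt, hy.not_gt]
  · filter_upwards [hg.eventually (lt_mem_nhds h)] with y hy
    simp [sgn, h, hy]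

theorem limit_lemma
    (d : ℕ) (hd : 1 ≤ d) (a : Fin d → ℝ) (lam : ℝ) (hlam : 0 < lam)
    (hint : ∀ i, ∃ k : ℤ, lam * a i = (k : ℝ))
    (f : ℝ → ℝ) (hf : Continuous f) (hper : ∀ t, f (t + 1) = f t)
    (hzero : {t | t ∈ Set.Ico (0:ℝ) 1 ∧ f t = 0}.Finite)
    (μ : ℕ → ℝ) (hequi : EquidistributedMod1 (fun n => μ n / lam))
    (s : Fin d → ℝ) (hs : ∀ i, s i = 1 ∨ s i = -1) :
    Tendsto (fun N : ℕ =>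
      (((Finset.range N).filter (fun n =>
        (fun i => sgn (f (μ n * a i))) = s ∨
        (fun i => sgn (f (μ n * a i))) = fun i => -(s i))).card : ℝ) / N)
      atTop (nhds (∫ t in (0:ℝ)..1,
        (if (fun i => sgn (f (lam * t * a i))) = s ∨
            (fun i => sgn (f (lam * t * a i))) = (fun i => -(s i))
         then (1:ℝ) else 0))) := by
  choose k hk using hint
  let v : ℝ → Fin d → ℝ := fun t i => sgn (f (lam * t * a i))
  have hv : ∀ t i, v t i = sgn (f (k i * t)) := fun t i => by
    simp only [v, ← hk i]
    ring_nf
  have hvper : Function.Periodic v 1 := fun t => by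
    ext i
    have := Function.Periodic.int_mul (f := f) hper (k i) (k i * t)
    rw [hv, hv, ← this]
    ring_nf
  have hP : Function.Periodic (fun t => v t = s ∨ v t = fun i => -(s i)) 1 := fun t => by
    simp only [hvper t]
  have hmain := hequi.tendsto_intervalIntegral hP
    (B := ⋃ i, {t | k i ≠ 0 ∧ t ∈ Set.Icc (0 : ℝ) 1 ∧ f (k i * t) = 0}) ?_ ?_
  · have hμ : ∀ n, lam * (μ n / lam) = μ n := fun n => mul_div_cancel₀ _ hlam.ne'
    simp only [v, hμ] at hmain
    convert hmain
  · refine Set.finite_iUnion fun i => ?_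
    by_cases hki : k i = 0
    · simp [hki]
    · exact (Function.Periodic.finite_zeros_comp_mul hper hzero (Int.cast_ne_zero.2 hki)).subset
        fun t ht => ht.2
  · intro x hx hxB
    by_cases hdeg : ∃ i, k i = 0 ∧ f 0 = 0
    · obtain ⟨i, hki, hf0⟩ := hdeg
      have hfalse : ∀ t, ¬(v t = s ∨ v t = fun i => -(s i)) := by
        intro t ht
        have hvi : v t i = 0 := by simp [hv, hki, hf0, sgn]
        rcases ht with h | h <;> rw [h] at hvi <;> rcases hs i with h' | h' <;>
          norm_num [h'] at hvi
      exact Eventually.of_forall fun y => by simp only [hfalse]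
    · have hne : ∀ i, f (k i * x) ≠ 0 := by
        intro i hi
        by_cases hki : k i = 0
        · exact hdeg ⟨i, hki, by simpa [hki] using hi⟩
        · exact hxB (Set.mem_iUnion.2 ⟨i, hki, Set.Ioo_subset_Icc_self hx, hi⟩)
      have hev : ∀ᶠ y in nhds x, ∀ i, v y i = v x i := by
        refine eventually_all.2 fun i => ?_
        simp only [hv]
        exact eventually_sgn_eq (g := fun y => f (k i * y)) (by fun_prop) (hne i)
      filter_upwards [hev] with y hy
      rw [funext hy]
end
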